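/- arXiv:1808.00551 — 4 statements merged into one kernel-verified Lean document; each statement's English description precedes it below -/
import Mathlib

section
/- Every tree T on n nodes is partition induced on any set S of 2n points in convex position in ℝ²: there exists a partition of S into n parts, each of size 2, such that conv(S_i) ∩ conv(S_j) ≠ ∅ if and only if {i,j} is an edge of T (and all triple intersections of distinct parts are empty). -/
/-!
Listing the points of `S` counterclockwise turns a partition of `S` into pairs into a chord
diagram on a convex polygon, and two chords meet exactly when their endpoints interleave. It is
therefore enough to represent the tree as the overlap graph of a family of intervals with distinct
endpoints. Remove a leaf `v` with neighbour `u`, represent the rest, and give `v` a tiny interval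
around the left endpoint of the interval of `u`: no other endpoint lies in it, so `v` overlaps `u`
alone. Triple intersections are empty because a tree contains no triangle.
-/

/-! ### Signed areas -/

section CommRing

variable {𝕜 : Type*} [CommRing 𝕜]

/-- Twice the signed area of the triangle `a b c`: over an ordered field, it is positive exactly
when the triangle is traversed counterclockwise. -/
def signedArea (a b c : Fin 2 → 𝕜) : 𝕜 :=
  (b 0 - a 0) * (c 1 - a 1) - (b 1 - a 1) * (c 0 - a 0)

theorem signedArea_rotate (a b c : Fin 2 → 𝕜) : signedArea b c a = signedArea a b c := by
  simp only [signedArea]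
  ring

theorem signedArea_swap_left (a b c : Fin 2 → 𝕜) : signedArea b a c = -signedArea a b c := by
  simp only [signedArea]
  ring

theorem signedArea_swap_right (a b c : Fin 2 → 𝕜) : signedArea a c b = -signedArea a b c := by
  simp only [signedArea]
  ring

@[simp]
theorem signedArea_self_left (a b : Fin 2 → 𝕜) : signedArea a a b = 0 := by
  simp [signedArea]

@[simp]
theorem signedArea_self_right (a b : Fin 2 → 𝕜) : signedArea a b b = 0 := by
  simp [signedArea, mul_comm]

@[simp]
theorem signedArea_self_outer (a b : Fin 2 → 𝕜) : signedArea a b a = 0 := by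
  simp [signedArea]

theorem signedArea_add_signedArea_add_signedArea (a b c x : Fin 2 → 𝕜) :
    signedArea x b c + signedArea a x c + signedArea a b x = signedArea a b c := by
  simp only [signedArea]
  ring

theorem signedArea_smul_eq_add (a b c x : Fin 2 → 𝕜) :
    signedArea a b c • x =
      signedArea x b c • a + signedArea a x c • b + signedArea a b x • c := by
  ext i
  fin_cases i <;>
  · simp only [signedArea, Fin.zero_eta, Fin.mk_one, Fin.isValue, Pi.add_apply, Pi.smul_apply,
      smul_eq_mul]
    ring

theorem signedArea_quadrilateral (a b c d : Fin 2 → 𝕜) :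
    signedArea b c d + signedArea a b d = signedArea a c d + signedArea a b c := by
  simp only [signedArea]
  ring

theorem signedArea_smul_diagonal (a b c d : Fin 2 → 𝕜) :
    signedArea b c d • a + signedArea a b d • c = signedArea a c d • b + signedArea a b c • d := by
  ext i
  fin_cases i <;>
  · simp only [signedArea, Fin.zero_eta, Fin.mk_one, Fin.isValue, Pi.add_apply, Pi.smul_apply,
      smul_eq_mul]
    ring

theorem signedArea_smul_add_smul (a b c d : Fin 2 → 𝕜) {s t : 𝕜} (hst : s + t = 1) :
    signedArea a b (s • c + t • d) = s • signedArea a b c + t • signedArea a b d := by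
  obtain rfl : s = 1 - t := eq_sub_of_add_eq hst
  simp only [signedArea, Pi.add_apply, Pi.smul_apply, smul_eq_mul]
  ring

end CommRing

theorem collinear_of_signedArea_eq_zero {𝕜 : Type*} [Field 𝕜] {a b c : Fin 2 → 𝕜}
    (h : signedArea a b c = 0) : Collinear 𝕜 ({a, b, c} : Set (Fin 2 → 𝕜)) := by
  obtain rfl | hab := eq_or_ne a b
  · simpa using collinear_pair 𝕜 a c
  obtain ⟨i, hi⟩ := Function.ne_iff.1 hab.symm
  have hi' : b i - a i ≠ 0 := sub_ne_zero.2 hi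
  have hc : c = AffineMap.lineMap a b ((c i - a i) / (b i - a i)) := by
    simp only [signedArea] at h
    ext j
    simp only [AffineMap.lineMap_apply, vsub_eq_sub, vadd_eq_add, Pi.add_apply, Pi.smul_apply,
      Pi.sub_apply, smul_eq_mul]
    rw [← sub_eq_iff_eq_add, div_mul_eq_mul_div, eq_div_iff hi']
    fin_cases i <;> fin_cases j <;> simp only [Fin.zero_eta, Fin.mk_one, Fin.isValue] <;> grind
  have hmem : c ∈ line[𝕜, a, b] := hc ▸ AffineMap.lineMap_mem_affineSpan_pair _ a b
  rw [Set.pair_comm b c, Set.insert_comm a c]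
  exact collinear_insert_of_mem_affineSpan_pair hmem

section OrderedField

variable {𝕜 : Type*} [Field 𝕜] [LinearOrder 𝕜] [IsStrictOrderedRing 𝕜]

theorem mem_convexHull_of_signedArea_nonneg {a b c x : Fin 2 → 𝕜} (ha : 0 < signedArea x b c)
    (hb : 0 ≤ signedArea a x c) (hc : 0 ≤ signedArea a b x) : x ∈ convexHull 𝕜 {a, b, c} := by
  let w : Fin 3 → 𝕜 := ![signedArea x b c, signedArea a x c, signedArea a b x]
  have hsum : ∑ i, w i = signedArea a b c := by
    simpa [w, Fin.sum_univ_three] using signedArea_add_signedArea_add_signedArea a b c x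
  have hpos : 0 < signedArea a b c := by
    linarith [signedArea_add_signedArea_add_signedArea a b c x]
  have hx : x = Finset.univ.centerMass w ![a, b, c] := by
    rw [Finset.centerMass, hsum, eq_inv_smul_iff₀ hpos.ne', signedArea_smul_eq_add]
    simp [w, Fin.sum_univ_three]
  rw [hx]
  refine Finset.centerMass_mem_convexHull _ ?_ (hsum ▸ hpos) ?_
  · intro i _
    fin_cases i
    exacts [ha.le, hb, hc]
  · intro i _
    fin_cases i <;> simp

theorem disjoint_segment_of_signedArea_pos {a b c d : Fin 2 → 𝕜} (hc : 0 < signedArea a b c)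
    (hd : 0 < signedArea a b d) : Disjoint (segment 𝕜 a b) (segment 𝕜 c d) := by
  rw [Set.disjoint_left]
  rintro x ⟨s, t, -, -, hst, rfl⟩ ⟨s', t', hs', ht', hst', hx⟩
  have hzero : signedArea a b (s • a + t • b) = 0 := by simp [signedArea_smul_add_smul _ _ _ _ hst]
  have hpos : 0 < signedArea a b (s' • c + t' • d) := by
    rw [signedArea_smul_add_smul _ _ _ _ hst']
    exact convex_Ioi (𝕜 := 𝕜) 0 hc hd hs' ht' hst'
  exact hpos.ne' (hx ▸ hzero)

theorem segment_inter_segment_nonempty_of_signedArea_pos {a b c d : Fin 2 → 𝕜}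
    (habc : 0 < signedArea a b c) (hacd : 0 < signedArea a c d) (habd : 0 < signedArea a b d)
    (hbcd : 0 < signedArea b c d) : (segment 𝕜 a c ∩ segment 𝕜 b d).Nonempty := by
  refine ⟨_, mem_segment_iff_div.2 ⟨_, _, hbcd.le, habd.le, add_pos hbcd habd, rfl⟩,
    mem_segment_iff_div.2 ⟨_, _, hacd.le, habc.le, add_pos hacd habc, ?_⟩⟩
  rw [signedArea_quadrilateral]
  simp only [div_eq_inv_mul, mul_smul, ← smul_add, signedArea_smul_diagonal]

end OrderedField

/-! ### Chords of a convex polygon -/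

section Overlap

variable {α : Type*}

/-- The intervals with endpoints `a < b` and `c < d` overlap: they meet, but neither contains the
other. Equivalently, the chords `ab` and `cd` of a polygon with ordered vertices cross. -/
def Overlap [LT α] (a b c d : α) : Prop :=
  (a < c ∧ c < b ∧ b < d) ∨ (c < a ∧ a < d ∧ d < b)

theorem overlap_comm [LT α] {a b c d : α} : Overlap a b c d ↔ Overlap c d a b :=
  or_comm

variable [LinearOrder α]

theorem overlap_iff_eq_or_eq {a b c d p : α} (hap : a < p) (hpb : p < b) (hcd : c < d)
    (hc : c ∈ Set.Icc a b → c = p) (hd : d ∈ Set.Icc a b → d = p) :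
    Overlap a b c d ↔ c = p ∨ d = p := by
  simp only [Set.mem_Icc, Overlap] at *
  grind

theorem exists_lt_lt_forall_mem_Icc_eq [DenselyOrdered α] [NoMinOrder α] [NoMaxOrder α]
    (A : Finset α) (p : α) : ∃ a b, a < p ∧ p < b ∧ ∀ x ∈ A, x ∈ Set.Icc a b → x = p := by
  have : Nonempty α := ⟨p⟩
  obtain ⟨a, ha, hap⟩ := Order.exists_between_finsets {x ∈ A | x < p} {p} (by simp)
  obtain ⟨b, hpb, hb⟩ := Order.exists_between_finsets {p} {x ∈ A | p < x} (by simp)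
  simp only [Finset.mem_filter, Finset.mem_singleton, forall_eq, and_imp] at ha hap hpb hb
  refine ⟨a, b, hap, hpb, fun x hx hxab ↦ ?_⟩
  exact le_antisymm (not_lt.1 fun h ↦ (hb x hx h).not_ge hxab.2)
    (not_lt.1 fun h ↦ (ha x hx h).not_ge hxab.1)

end Overlap

/-- The points `q i`, listed by increasing `i`, are the vertices of a convex polygon in
counterclockwise order. This is encoded by the orientations of all triples. -/
def IsCounterclockwise {𝕜 ι : Type*} [CommRing 𝕜] [LT 𝕜] [LT ι] (q : ι → Fin 2 → 𝕜) : Prop :=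
  ∀ ⦃i j k⦄, i < j → j < k → 0 < signedArea (q i) (q j) (q k)

section Polygon

variable {𝕜 ι : Type*} [Field 𝕜] [LinearOrder 𝕜] [IsStrictOrderedRing 𝕜]

theorem IsCounterclockwise.segment_inter_segment_nonempty_iff [LinearOrder ι] {q : ι → Fin 2 → 𝕜}
    (hq : IsCounterclockwise q) {a b c d : ι} (hab : a < b) (hcd : c < d)
    (hdisj : Disjoint ({a, b} : Finset ι) {c, d}) :
    (segment 𝕜 (q a) (q b) ∩ segment 𝕜 (q c) (q d)).Nonempty ↔ Overlap a b c d := by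
  wlog hac : a < c generalizing a b c d
  · rw [Set.inter_comm, overlap_comm]
    exact this hcd hab hdisj.symm (by grind)
  obtain ⟨hbc, hbd⟩ : b ≠ c ∧ b ≠ d := by
    constructor <;> rintro rfl <;> simp at hdisj
  have hiff : Overlap a b c d ↔ c < b ∧ b < d := by grind [Overlap]
  rw [hiff, ← Set.not_disjoint_iff_nonempty_inter]
  obtain hbc | hcb := hbc.lt_or_gt
  · refine iff_of_false (not_not_intro ?_) fun h ↦ h.1.not_gt hbc
    exact disjoint_segment_of_signedArea_pos (hq hab hbc) (hq hab (hbc.trans hcd))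
  obtain hbd | hdb := hbd.lt_or_gt
  · refine iff_of_true (Set.not_disjoint_iff_nonempty_inter.2 ?_) ⟨hcb, hbd⟩
    exact segment_inter_segment_nonempty_of_signedArea_pos (hq hac hcb) (hq hab hbd)
      (hq hac hcd) (hq hcb hbd)
  · refine iff_of_false (not_not_intro ?_) fun h ↦ h.2.not_gt hdb
    rw [segment_symm 𝕜 (q a)]
    apply disjoint_segment_of_signedArea_pos
    · rw [← signedArea_rotate]
      exact hq hac hcb
    · rw [← signedArea_rotate]
      exact hq (hac.trans hcd) hdb

end Polygon

/-! ### Enumerating points in convex position -/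

theorem nonempty_relIso_fin {α : Type*} [Fintype α] (r : α → α → Prop) [IsStrictTotalOrder α r]
    {N : ℕ} (hN : Fintype.card α = N) : Nonempty (((· < ·) : Fin N → Fin N → Prop) ≃r r) := by
  classical
  let := linearOrderOfSTO r
  exact ⟨(Fintype.orderIsoFinOfCardEq α hN).toRelIsoLT⟩

section ConvexIndependent

variable {𝕜 ι : Type*} [Field 𝕜] [LinearOrder 𝕜] [IsStrictOrderedRing 𝕜] {p : ι → Fin 2 → 𝕜}

theorem signedArea_ne_zero_of_convexIndependent (hp : ConvexIndependent 𝕜 p) {i j k : ι}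
    (hij : i ≠ j) (hjk : j ≠ k) (hik : i ≠ k) : signedArea (p i) (p j) (p k) ≠ 0 := by
  intro h
  have not_wbtw {x y z : ι} (hyx : y ≠ x) (hyz : y ≠ z) : ¬Wbtw 𝕜 (p x) (p y) (p z) := by
    intro hw
    have hy : p y ∈ convexHull 𝕜 (p '' {x, z}) := by
      rw [Set.image_pair, convexHull_pair]
      exact mem_segment_iff_wbtw.2 hw
    simpa [hyx, hyz] using hp {x, z} y hy
  rcases (collinear_of_signedArea_eq_zero h).wbtw_or_wbtw_or_wbtw with hw | hw | hw
  · exact not_wbtw hij.symm hjk hw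
  · exact not_wbtw hjk.symm hik.symm hw
  · exact not_wbtw hik hij hw

theorem signedArea_neg_of_convexIndependent (hp : ConvexIndependent 𝕜 p) {a b c x : ι}
    (ha : 0 < signedArea (p x) (p b) (p c)) (hb : 0 < signedArea (p a) (p x) (p c)) :
    signedArea (p a) (p b) (p x) < 0 := by
  by_contra! hc
  have hx : p x ∈ convexHull 𝕜 (p '' {a, b, c}) := by
    simpa [Set.image_insert_eq] using mem_convexHull_of_signedArea_nonneg ha hb.le hc
  rcases hp _ _ hx with rfl | rfl | rfl
  · simp at hb
  · simp at ha
  · simp at ha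

theorem signedArea_pos_trans (hp : ConvexIndependent 𝕜 p) {o i j k : ι}
    (hij : 0 < signedArea (p o) (p i) (p j)) (hjk : 0 < signedArea (p o) (p j) (p k)) :
    0 < signedArea (p o) (p i) (p k) := by
  have hkj : 0 < signedArea (p k) (p o) (p j) := by rwa [← signedArea_rotate]
  have hkio := signedArea_neg_of_convexIndependent hp hij hkj
  rwa [signedArea_swap_left, neg_neg_iff_pos, signedArea_rotate] at hkio

theorem signedArea_pos_of_fan (hp : ConvexIndependent 𝕜 p) {o i j k : ι}
    (hij : 0 < signedArea (p o) (p i) (p j)) (hjk : 0 < signedArea (p o) (p j) (p k)) :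
    0 < signedArea (p i) (p j) (p k) := by
  have hjko : 0 < signedArea (p j) (p k) (p o) := by rwa [signedArea_rotate]
  have hijo : 0 < signedArea (p i) (p j) (p o) := by rwa [signedArea_rotate]
  have hikj := signedArea_neg_of_convexIndependent hp hjko hijo
  rwa [signedArea_swap_right, neg_neg_iff_pos] at hikj

/-- The order in which a counterclockwise sweep about `p o` meets the points `p i`, with `p o`
itself counted first. -/
def SweepsBefore (p : ι → Fin 2 → 𝕜) (o i j : ι) : Prop :=
  (i = o ∧ j ≠ o) ∨ 0 < signedArea (p o) (p i) (p j)

theorem isStrictTotalOrder_sweepsBefore (hp : ConvexIndependent 𝕜 p) (o : ι) :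
    IsStrictTotalOrder ι (SweepsBefore p o) where
  trichotomous i j hij hji := by
    simp only [SweepsBefore, not_or, not_and_not_right, not_lt] at hij hji
    by_contra hne
    have hio : o ≠ i := fun h ↦ hne (h.symm.trans (hij.1 h.symm).symm)
    have hjo : o ≠ j := fun h ↦ hne ((hji.1 h.symm).trans h)
    rw [signedArea_swap_right, neg_nonpos] at hji
    exact signedArea_ne_zero_of_convexIndependent hp hio hne hjo (hij.2.antisymm hji.2)
  irrefl i hi := by simp [SweepsBefore] at hi
  trans i j k := by
    rintro (⟨rfl, hj⟩ | hij) (⟨rfl, -⟩ | hjk)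
    · exact absurd rfl hj
    · exact Or.inl ⟨rfl, by rintro rfl; simp at hjk⟩
    · simp at hij
    · exact Or.inr (signedArea_pos_trans hp hij hjk)

theorem exists_equiv_isCounterclockwise [Fintype ι] (hp : ConvexIndependent 𝕜 p) {N : ℕ}
    (hN : Fintype.card ι = N) : ∃ e : Fin N ≃ ι, IsCounterclockwise (p ∘ e) := by
  obtain hι | ⟨⟨o⟩⟩ := isEmpty_or_nonempty ι
  · let e := (Fintype.equivFinOfCardEq hN).symm
    exact ⟨e, fun i ↦ isEmptyElim (e i)⟩
  have := isStrictTotalOrder_sweepsBefore hp o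
  obtain ⟨e⟩ := nonempty_relIso_fin (SweepsBefore p o) hN
  refine ⟨e.toEquiv, fun i j k hij hjk ↦ ?_⟩
  change 0 < signedArea (p (e i)) (p (e j)) (p (e k))
  have hij' : SweepsBefore p o (e i) (e j) := e.map_rel_iff.2 hij
  have hjk' : SweepsBefore p o (e j) (e k) := e.map_rel_iff.2 hjk
  rcases hjk' with ⟨hj, -⟩ | hjk'
  · simp [SweepsBefore, hj] at hij'
  rcases hij' with ⟨hi, -⟩ | hij'
  · rwa [hi]
  · exact signedArea_pos_of_fan hp hij' hjk'

end ConvexIndependent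

/-! ### Forests are overlap graphs -/

section Forest

variable {V α : Type*} {G : SimpleGraph V}

theorem exists_neighborSet_subsingleton [Finite V] [Nonempty V] (hG : G.IsAcyclic) :
    ∃ v, (G.neighborSet v).Subsingleton := by
  classical
  obtain hV | hV := subsingleton_or_nontrivial V
  · exact ⟨Classical.arbitrary V, Set.subsingleton_of_subsingleton⟩
  have := Fintype.ofFinite V
  obtain ⟨T, hGT, -, hT⟩ :=
    SimpleGraph.connected_top.exists_isTree_le_of_le_of_isAcyclic le_top hG
  obtain ⟨v, hv⟩ := hT.exists_vert_degree_one_of_nontrivial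
  obtain ⟨u, -, hu⟩ := SimpleGraph.degree_eq_one_iff_existsUnique_adj.1 hv
  exact ⟨v, fun x hx y hy ↦ (hu x (hGT hx)).trans (hu y (hGT hy)).symm⟩

theorem exists_mem_neighborSet_inter_subsingleton (hG : G.IsAcyclic) {s : Finset V}
    (hs : s.Nonempty) : ∃ v ∈ s, (G.neighborSet v ∩ s).Subsingleton := by
  have := hs.to_subtype
  obtain ⟨⟨v, hv⟩, hsub⟩ := exists_neighborSet_subsingleton (hG.induce (s : Set V))
  refine ⟨v, hv, fun x hx y hy ↦ ?_⟩
  exact congrArg Subtype.val (@hsub ⟨x, hx.2⟩ hx.1 ⟨y, hy.2⟩ hy.1)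

variable [LinearOrder α]

/-- The intervals `[l v, r v]`, for `v ∈ s`, have pairwise distinct endpoints and represent the
subgraph of `G` induced on `s` as their overlap graph. -/
structure IsOverlapModelOn (G : SimpleGraph V) (l r : V → α) (s : Set V) : Prop where
  lt : ∀ v ∈ s, l v < r v
  disjoint : s.PairwiseDisjoint fun v ↦ ({l v, r v} : Finset α)
  overlap_iff : s.Pairwise fun u v ↦ Overlap (l u) (r u) (l v) (r v) ↔ G.Adj u v

namespace IsOverlapModelOn

variable {l r l' r' : V → α} {s : Set V}

theorem congr (h : IsOverlapModelOn G l r s) (hl : s.EqOn l' l) (hr : s.EqOn r' r) :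
    IsOverlapModelOn G l' r' s where
  lt v hv := by simpa only [hl hv, hr hv] using h.lt v hv
  disjoint u hu v hv huv := by
    simpa only [Function.onFun, hl hu, hl hv, hr hu, hr hv] using h.disjoint hu hv huv
  overlap_iff u hu v hv huv := by
    simpa only [hl hu, hl hv, hr hu, hr hv] using h.overlap_iff hu hv huv

theorem insert (h : IsOverlapModelOn G l r s) {v : V} (hlt : l v < r v)
    (hdisj : ∀ w ∈ s, Disjoint ({l v, r v} : Finset α) {l w, r w})
    (hadj : ∀ w ∈ s, Overlap (l v) (r v) (l w) (r w) ↔ G.Adj v w) :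
    IsOverlapModelOn G l r (Insert.insert v s) where
  lt := Set.forall_mem_insert.2 ⟨hlt, h.lt⟩
  disjoint := Set.pairwiseDisjoint_insert.2 ⟨h.disjoint, fun w hw _ ↦ hdisj w hw⟩
  overlap_iff := h.overlap_iff.insert fun w hw _ ↦
    ⟨hadj w hw, by rw [overlap_comm, G.adj_comm, hadj w hw]⟩

theorem exists_eq_or_eq_iff_adj [Infinite α] {s : Finset V} {v : V}
    (h : IsOverlapModelOn G l r s) (hsub : (G.neighborSet v ∩ s).Subsingleton) :
    ∃ p, ∀ w ∈ s, l w = p ∨ r w = p ↔ G.Adj v w := by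
  obtain hempty | ⟨u, hu⟩ := (G.neighborSet v ∩ s).eq_empty_or_nonempty
  · obtain ⟨p, hp⟩ := Infinite.exists_notMem_finset (s.biUnion fun w ↦ {l w, r w})
    refine ⟨p, fun w hw ↦ iff_of_false (by grind) fun hvw ↦ ?_⟩
    exact hempty.le ⟨hvw, hw⟩
  · refine ⟨l u, fun w hw ↦ ⟨fun hwu ↦ ?_, fun hvw ↦ Or.inl ?_⟩⟩
    · obtain rfl : w = u := by
        by_contra hne
        have := h.disjoint hw hu.2 hne
        grind [Finset.disjoint_left]
      exact hu.1
    · rw [hsub ⟨hvw, hw⟩ hu]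

theorem exists_insert [DenselyOrdered α] [NoMinOrder α] [NoMaxOrder α] {s : Finset V} {v : V}
    {p : α} (h : IsOverlapModelOn G l r s) (hv : v ∉ s)
    (hp : ∀ w ∈ s, l w = p ∨ r w = p ↔ G.Adj v w) :
    ∃ l' r' : V → α, IsOverlapModelOn G l' r' (Insert.insert v (s : Set V)) := by
  classical
  obtain ⟨a, b, hap, hpb, hab⟩ :=
    exists_lt_lt_forall_mem_Icc_eq (s.biUnion fun w ↦ {l w, r w}) p
  have hlw (w : V) (hw : w ∈ s) : l w ∈ Set.Icc a b → l w = p := hab _ (by grind)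
  have hrw (w : V) (hw : w ∈ s) : r w ∈ Set.Icc a b → r w = p := hab _ (by grind)
  have hl (w : V) (hw : w ∈ s) : Function.update l v a w = l w := by grind
  have hr (w : V) (hw : w ∈ s) : Function.update r v b w = r w := by grind
  refine ⟨Function.update l v a, Function.update r v b, (h.congr hl hr).insert ?_ ?_ ?_⟩
  · simpa using hap.trans hpb
  · intro w hw
    specialize hlw w hw
    specialize hrw w hw
    simp only [Function.update_self, hl w hw, hr w hw, Set.mem_Icc] at *
    simp only [Finset.disjoint_insert_left, Finset.disjoint_singleton_left, Finset.mem_insert,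
      Finset.mem_singleton]
    grind
  · intro w hw
    rw [Function.update_self, Function.update_self, hl w hw, hr w hw,
      overlap_iff_eq_or_eq hap hpb (h.lt w hw) (hlw w hw) (hrw w hw), hp w hw]

theorem of_comp {β : Type*} [LinearOrder β] (φ : α ↪o β)
    (h : IsOverlapModelOn G (φ ∘ l) (φ ∘ r) s) : IsOverlapModelOn G l r s where
  lt v hv := φ.lt_iff_lt.1 (h.lt v hv)
  disjoint u hu v hv huv := by
    simpa [Function.onFun, φ.injective.eq_iff] using h.disjoint hu hv huv
  overlap_iff u hu v hv huv := by
    simpa [Overlap] using h.overlap_iff hu hv huv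

theorem card_biUnion [Fintype V] (h : IsOverlapModelOn G l r Set.univ) :
    (Finset.univ.biUnion fun v ↦ ({l v, r v} : Finset α)).card = 2 * Fintype.card V := by
  rw [Finset.card_biUnion fun u _ v _ huv ↦ h.disjoint trivial trivial huv,
    Finset.sum_congr rfl fun v _ ↦ Finset.card_pair (h.lt v trivial).ne, Finset.sum_const,
    Finset.card_univ, smul_eq_mul, mul_comm]

theorem exists_fin [Fintype V] (h : IsOverlapModelOn G l r Set.univ) :
    ∃ l' r' : V → Fin (2 * Fintype.card V), IsOverlapModelOn G l' r' Set.univ := by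
  let endpoints : Finset α := Finset.univ.biUnion fun v ↦ {l v, r v}
  let φ := endpoints.orderEmbOfFin h.card_biUnion
  have hφ : Set.range φ = endpoints := endpoints.range_orderEmbOfFin _
  have hl (v : V) : l v ∈ Set.range φ := by simpa [hφ, endpoints] using ⟨v, Or.inl rfl⟩
  have hr (v : V) : r v ∈ Set.range φ := by simpa [hφ, endpoints] using ⟨v, Or.inr rfl⟩
  choose l' hl' using hl
  choose r' hr' using hr
  exact ⟨l', r', of_comp φ (h.congr (fun v _ ↦ hl' v) fun v _ ↦ hr' v)⟩

end IsOverlapModelOn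

theorem exists_isOverlapModelOn [Nonempty α] [DenselyOrdered α] [NoMinOrder α] [NoMaxOrder α]
    (hG : G.IsAcyclic) (s : Finset V) : ∃ l r : V → α, IsOverlapModelOn G l r s := by
  classical
  have := NoMaxOrder.infinite (α := α)
  induction s using Finset.strongInduction with
  | H s ih =>
    obtain rfl | hs := s.eq_empty_or_nonempty
    · have p : α := Classical.arbitrary α
      exact ⟨fun _ ↦ p, fun _ ↦ p, by simp, by simp, by simp⟩
    obtain ⟨v, hv, hsub⟩ := exists_mem_neighborSet_inter_subsingleton hG hs
    obtain ⟨l, r, h⟩ := ih (s.erase v) (Finset.erase_ssubset hv)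
    obtain ⟨p, hp⟩ := h.exists_eq_or_eq_iff_adj <|
      hsub.anti (Set.inter_subset_inter_right _ (Finset.coe_subset.2 (s.erase_subset v)))
    obtain ⟨l', r', h'⟩ := h.exists_insert (s.notMem_erase v) hp
    rw [← Finset.coe_insert, Finset.insert_erase hv] at h'
    exact ⟨l', r', h'⟩

end Forest

/-! ### Partitions induced by forests -/

theorem IsOverlapModelOn.exists_partition {𝕜 V : Type*} [Field 𝕜] [LinearOrder 𝕜]
    [IsStrictOrderedRing 𝕜] [DecidableEq (Fin 2 → 𝕜)] [Fintype V] {G : SimpleGraph V}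
    {l r : V → Fin (2 * Fintype.card V)} (h : IsOverlapModelOn G l r Set.univ)
    {S : Finset (Fin 2 → 𝕜)} (hcard : S.card = 2 * Fintype.card V)
    (hS : ConvexIndependent 𝕜 ((↑) : S → Fin 2 → 𝕜)) :
    ∃ P : V → Finset (Fin 2 → 𝕜),
      (∀ v, (P v).card = 2) ∧
      (∀ u v, u ≠ v → Disjoint (P u) (P v)) ∧
      S = Finset.univ.biUnion P ∧
      (∀ u v, u ≠ v →
        ((convexHull 𝕜 (P u : Set (Fin 2 → 𝕜)) ∩
          convexHull 𝕜 (P v : Set (Fin 2 → 𝕜))).Nonempty ↔ G.Adj u v)) := by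
  obtain ⟨e, hq⟩ := exists_equiv_isCounterclockwise hS ((Fintype.card_coe S).trans hcard)
  let q : Fin (2 * Fintype.card V) ↪ (Fin 2 → 𝕜) := e.toEmbedding.trans (.subtype _)
  have hqS : Finset.univ.map q = S := by
    rw [← Finset.map_map, Finset.map_univ_equiv]
    exact Finset.attach_map_val
  have hall : Finset.univ.biUnion (fun v ↦ ({l v, r v} : Finset _)) = Finset.univ :=
    Finset.card_eq_iff_eq_univ _ |>.1 (by simp [h.card_biUnion])
  refine ⟨fun v ↦ ({l v, r v} : Finset _).map q, fun v ↦ ?_, fun u v huv ↦ ?_, ?_,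
    fun u v huv ↦ ?_⟩
  · rw [Finset.card_map, Finset.card_pair (h.lt v trivial).ne]
  · exact (Finset.disjoint_map q).2 (h.disjoint trivial trivial huv)
  · rw [← hqS, ← hall, Finset.map_eq_image, Finset.biUnion_image]
    simp only [Finset.map_eq_image]
  · have hcross := hq.segment_inter_segment_nonempty_iff (h.lt u trivial) (h.lt v trivial)
      (h.disjoint trivial trivial huv)
    rw [Finset.coe_map, Finset.coe_map, Finset.coe_pair, Finset.coe_pair, Set.image_pair,
      Set.image_pair, convexHull_pair, convexHull_pair]
    exact hcross.trans (h.overlap_iff trivial trivial huv)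

theorem tree_partition_induced_convex_position_general {𝕜 V : Type*} [Field 𝕜] [LinearOrder 𝕜]
    [IsStrictOrderedRing 𝕜] [DecidableEq (Fin 2 → 𝕜)] [Fintype V] {G : SimpleGraph V}
    (hG : G.IsAcyclic) {S : Finset (Fin 2 → 𝕜)} (hcard : S.card = 2 * Fintype.card V)
    (hS : ConvexIndependent 𝕜 ((↑) : S → Fin 2 → 𝕜)) :
    ∃ P : V → Finset (Fin 2 → 𝕜),
      (∀ v, (P v).card = 2) ∧
      (∀ u v, u ≠ v → Disjoint (P u) (P v)) ∧
      S = Finset.univ.biUnion P ∧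
      (∀ u v, u ≠ v →
        ((convexHull 𝕜 (P u : Set (Fin 2 → 𝕜)) ∩
          convexHull 𝕜 (P v : Set (Fin 2 → 𝕜))).Nonempty ↔ G.Adj u v)) ∧
      (∀ u v w, u ≠ v → v ≠ w → u ≠ w →
        convexHull 𝕜 (P u : Set (Fin 2 → 𝕜)) ∩
          convexHull 𝕜 (P v : Set (Fin 2 → 𝕜)) ∩
          convexHull 𝕜 (P w : Set (Fin 2 → 𝕜)) = ∅) := by
  classical
  obtain ⟨l, r, hmodel⟩ := exists_isOverlapModelOn (α := ℚ) hG Finset.univ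
  rw [Finset.coe_univ] at hmodel
  obtain ⟨l', r', hmodel'⟩ := hmodel.exists_fin
  obtain ⟨P, hP, hdisj, hunion, hadj⟩ := hmodel'.exists_partition hcard hS
  refine ⟨P, hP, hdisj, hunion, hadj, fun u v w huv hvw huw ↦ ?_⟩
  rw [← Set.not_nonempty_iff_eq_empty]
  rintro ⟨x, ⟨hu, hv⟩, hw⟩
  refine hG.cliqueFree le_rfl {u, v, w} (SimpleGraph.is3Clique_triple_iff.2 ⟨?_, ?_, ?_⟩)
  · exact (hadj u v huv).1 ⟨x, hu, hv⟩
  · exact (hadj u w huw).1 ⟨x, hu, hw⟩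
  · exact (hadj v w hvw).1 ⟨x, hv, hw⟩

/-- Every tree `T` on `n` nodes is partition induced on any set `S` of `2n`
points in convex (and general) position in the plane: there is a partition of `S` into `n`
pairs whose convex hulls intersect exactly along the edges of `T`, with all triple
intersections empty. -/
theorem tree_partition_induced_convex_position
    {n : ℕ} (hn : 1 ≤ n)
    (T : SimpleGraph (Fin n)) (hT : T.IsTree)
    (S : Finset (Fin 2 → ℝ)) (hcard : S.card = 2 * n)
    -- convex position
    (hconv : ∀ x ∈ S, x ∉ convexHull ℝ ((S : Set (Fin 2 → ℝ)) \ {x}))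
    -- general position: no three points collinear
    (hgen : ∀ x ∈ S, ∀ y ∈ S, ∀ z ∈ S, x ≠ y → y ≠ z → x ≠ z →
      ¬ Collinear ℝ ({x, y, z} : Set (Fin 2 → ℝ))) :
    ∃ P : Fin n → Finset (Fin 2 → ℝ),
      (∀ i, (P i).card = 2) ∧
      (∀ i j, i ≠ j → Disjoint (P i) (P j)) ∧
      S = Finset.univ.biUnion P ∧
      (∀ i j, i ≠ j →
        ((convexHull ℝ (P i : Set (Fin 2 → ℝ)) ∩
          convexHull ℝ (P j : Set (Fin 2 → ℝ))).Nonempty ↔ T.Adj i j)) ∧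
      (∀ i j k, i ≠ j → j ≠ k → i ≠ k →
        convexHull ℝ (P i : Set (Fin 2 → ℝ)) ∩
          convexHull ℝ (P j : Set (Fin 2 → ℝ)) ∩
          convexHull ℝ (P k : Set (Fin 2 → ℝ)) = ∅) := by
  exact tree_partition_induced_convex_position_general hT.isAcyclic (by simpa using hcard)
    (convexIndependent_set_iff_notMem_convexHull_sdiff.2 hconv)
end

section
/- For every n ≥ 4 and d ≥ 2, every set of at least nd + n + 4d points in general position in ℝ^d admits a partition into n parts S_1,…,S_n such that conv(S_i) ∩ conv(S_j) ≠ ∅ if and only if |i − j| = 1 or {i,j} = {1,n}; i.e., the nerve of the partition is the n-cycle C_n. -/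
/-!
Put `D = dim E + 1` and project the points to a plane by a pair of linear forms `(g, h)`, with `g`
injective on `S` and no three images on a line. Fix a level of `g` having exactly `2D + 1` points
on its lower side. A discrete ham-sandwich argument (the intermediate value theorem, applied to
order statistics of `h - s g` as the slope `s` varies) yields a second line below which lie
`D + 1` of these points and `D` of the remaining ones. After a slight shift of the level, the
points of the fourth quadrant have distinct slopes from the apex where the two lines meet, so rays
from the apex cut that quadrant into sectors. This gives `n` blocks `σ i`, cyclically ordered
around the apex, with at least `D` points each and `D + 1` in the first. For `i`, `j` non-adjacent,
a line through the apex separates `σ (i - 1) ∪ σ i` from `σ (j - 1) ∪ σ j`.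

Apply Radon's theorem to each block in turn, together with one point borrowed from the previous
Radon class (the first block needs none, having `D + 1` points). One finds `B i ⊆ σ i` such that
the hulls of `B i` and of `P i = (σ i \ B i) ∪ B (i - 1)` meet. Since `B i ⊆ P (i + 1)`, the hulls
of `P i` and `P (i + 1)` meet, while `P i ⊆ σ (i - 1) ∪ σ i` shows that those of non-adjacent
parts are disjoint. There are no triple intersections because `C_n` has no triangle for `n ≥ 4`.
-/

open Finset Function Module SimpleGraph

namespace CyclePartition

section CycleGraph

lemma cycleGraph_adj_iff_val {n : ℕ} {i j : Fin n} (hij : i ≠ j) :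
    (cycleGraph n).Adj i j ↔ (i : ℕ) + 1 = j ∨ (j : ℕ) + 1 = i ∨
      ((i : ℕ) = 0 ∧ (j : ℕ) = n - 1) ∨ ((j : ℕ) = 0 ∧ (i : ℕ) = n - 1) := by
  have hij' : (i : ℕ) ≠ j := Fin.val_ne_of_ne hij
  rw [cycleGraph_adj']
  rcases hij'.lt_or_gt with h | h
  · rw [Fin.coe_sub_iff_lt.2 h, Fin.coe_sub_iff_le.2 h.le]
    lia
  · rw [Fin.coe_sub_iff_lt.2 h, Fin.coe_sub_iff_le.2 h.le]
    lia

lemma cycleGraph_cliqueFree_three {n : ℕ} (hn : 4 ≤ n) : (cycleGraph n).CliqueFree 3 := by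
  intro s hs
  obtain ⟨i, j, k, hij, hik, hjk, -⟩ := is3Clique_iff.1 hs
  have := (cycleGraph_adj_iff_val hij.ne).1 hij
  have := (cycleGraph_adj_iff_val hik.ne).1 hik
  have := (cycleGraph_adj_iff_val hjk.ne).1 hjk
  lia

end CycleGraph

section Convexity

variable {𝕜 E : Type*} [Field 𝕜] [LinearOrder 𝕜] [AddCommGroup E] [Module 𝕜 E]

variable (𝕜) in
/-- `P` partitions `S` into `n` nonempty parts and the nerve of `P` is the cycle `C_n`, seen as a
one-dimensional complex: its edges are those of `cycleGraph n` and it has no 2-faces. -/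
structure IsCyclePartition {n : ℕ} (S : Finset E) (P : Fin n → Finset E) : Prop where
  nonempty : ∀ i, (P i).Nonempty
  disjoint : Pairwise (Disjoint on P)
  mem_iff : ∀ x, x ∈ S ↔ ∃ i, x ∈ P i
  inter_nonempty_iff : ∀ i j, i ≠ j →
    ((convexHull 𝕜 (P i : Set E) ∩ convexHull 𝕜 (P j : Set E)).Nonempty ↔ (cycleGraph n).Adj i j)
  inter_inter_eq_empty : ∀ i j k, i ≠ j → j ≠ k → i ≠ k →
    convexHull 𝕜 (P i : Set E) ∩ convexHull 𝕜 (P j : Set E) ∩ convexHull 𝕜 (P k : Set E) = ∅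

lemma IsCyclePartition.of_disjoint {n : ℕ} [NeZero n] (hn : 4 ≤ n) {S : Finset E}
    {P : Fin n → Finset E} (hne : ∀ i, (P i).Nonempty) (hdisj : Pairwise (Disjoint on P))
    (hmem : ∀ x, x ∈ S ↔ ∃ i, x ∈ P i)
    (hadj : ∀ i j, j - i = 1 → (convexHull 𝕜 (P i : Set E) ∩ convexHull 𝕜 (P j : Set E)).Nonempty)
    (hsep : ∀ i j, i < j → ¬ (cycleGraph n).Adj i j →
      Disjoint (convexHull 𝕜 (P i : Set E)) (convexHull 𝕜 (P j : Set E))) :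
    IsCyclePartition 𝕜 S P := by
  have hinter (i j : Fin n) (hij : i ≠ j) :
      (convexHull 𝕜 (P i : Set E) ∩ convexHull 𝕜 (P j : Set E)).Nonempty ↔
        (cycleGraph n).Adj i j := by
    refine ⟨fun h ↦ ?_, fun h ↦ ?_⟩
    · by_contra hnadj
      rcases hij.lt_or_gt with hlt | hlt
      · exact Set.not_disjoint_iff_nonempty_inter.2 h (hsep i j hlt hnadj)
      · exact Set.not_disjoint_iff_nonempty_inter.2 h
          (hsep j i hlt fun h ↦ hnadj h.symm).symm
    · obtain ⟨m, rfl⟩ := Nat.exists_eq_add_of_le' hn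
      rcases cycleGraph_adj.1 h with h | h
      · rw [Set.inter_comm]
        exact hadj j i h
      · exact hadj i j h
  refine ⟨hne, hdisj, hmem, hinter, fun i j k hij hjk hik ↦ ?_⟩
  by_contra hnonempty
  obtain ⟨z, ⟨hi, hj⟩, hk⟩ := Set.nonempty_iff_ne_empty.2 hnonempty
  classical
  exact cycleGraph_cliqueFree_three hn {i, j, k} (is3Clique_triple_iff.2
    ⟨(hinter i j hij).1 ⟨z, hi, hj⟩, (hinter i k hik).1 ⟨z, hi, hk⟩,
      (hinter j k hjk).1 ⟨z, hj, hk⟩⟩)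

variable [IsStrictOrderedRing 𝕜]

lemma disjoint_convexHull_of_le_of_lt (φ : E →ᵃ[𝕜] 𝕜) (c : 𝕜) {X Y : Set E}
    (hX : ∀ x ∈ X, φ x ≤ c) (hY : ∀ y ∈ Y, c < φ y) :
    Disjoint (convexHull 𝕜 X) (convexHull 𝕜 Y) :=
  (Set.disjoint_left.2 fun _ (h : φ _ ≤ c) (h' : c < φ _) ↦ h.not_gt h').mono
    (convexHull_min hX ((convex_Iic c).affine_preimage φ))
    (convexHull_min hY ((convex_Ioi c).affine_preimage φ))

variable [FiniteDimensional 𝕜 E]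

section Radon

variable [DecidableEq E]

lemma exists_radon_subset {S : Finset E} (hS : finrank 𝕜 E + 2 ≤ #S) :
    ∃ B ⊆ S, (convexHull 𝕜 (B : Set E) ∩ convexHull 𝕜 ((S \ B : Finset E) : Set E)).Nonempty := by
  have hdep : ¬ AffineIndependent 𝕜 ((↑) : S → E) := fun h ↦ by
    have hcard := h.card_le_finrank_succ
    have hrank := (vectorSpan 𝕜 (Set.range ((↑) : S → E))).finrank_le
    rw [Fintype.card_coe] at hcard
    lia
  obtain ⟨I, hI⟩ := Convex.radon_partition hdep
  classical
  refine ⟨{x : S | x ∈ I}.toFinset.map (Embedding.subtype _), fun x hx ↦ ?_, ?_⟩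
  · obtain ⟨y, -, rfl⟩ := Finset.mem_map.1 hx
    exact y.2
  · convert hI using 3 <;> ext x <;> simp; grind

lemma exists_radon_subset_union {S C : Finset E} (hS : finrank 𝕜 E + 1 ≤ #S) (hC : C.Nonempty)
    (hCS : Disjoint C S) :
    ∃ B ⊆ S,
      (convexHull 𝕜 (B : Set E) ∩ convexHull 𝕜 ((S \ B ∪ C : Finset E) : Set E)).Nonempty := by
  obtain ⟨p, hp⟩ := hC
  have hpS : p ∉ S := Finset.disjoint_left.1 hCS hp
  obtain ⟨B, hB, hne⟩ := exists_radon_subset (𝕜 := 𝕜) (S := insert p S)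
    (by rw [card_insert_of_notMem hpS]; lia)
  -- Of the two Radon classes, return the one that avoids the shared point `p`.
  by_cases hpB : p ∈ B
  · refine ⟨insert p S \ B, by grind, ?_⟩
    rw [Set.inter_comm] at hne
    exact hne.mono (by gcongr; grind)
  · exact ⟨B, by grind, hne.mono (by gcongr; grind)⟩

lemma exists_radon_cycle {n : ℕ} (σ : Fin (n + 1) → Finset E)
    (hdisj : ∀ i : Fin n, Disjoint (σ i.castSucc) (σ i.succ))
    (hσ : ∀ i, finrank 𝕜 E + 1 ≤ #(σ i)) (hσ₀ : finrank 𝕜 E + 2 ≤ #(σ 0)) :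
    ∃ B : Fin (n + 1) → Finset E, (∀ i, B i ⊆ σ i) ∧ ∀ i,
      (convexHull 𝕜 (B i : Set E) ∩
        convexHull 𝕜 ((σ i \ B i ∪ B (i - 1) : Finset E) : Set E)).Nonempty := by
  have step (i : Fin n) (C : {C : Finset E // C ⊆ σ i.castSucc ∧ C.Nonempty}) :
      ∃ B : {B : Finset E // B ⊆ σ i.succ ∧ B.Nonempty}, (convexHull 𝕜 (B : Set E) ∩
        convexHull 𝕜 ((σ i.succ \ B ∪ C : Finset E) : Set E)).Nonempty := by
    obtain ⟨B, hB, hne⟩ :=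
      exists_radon_subset_union (hσ i.succ) C.2.2 ((hdisj i).mono_left C.2.1)
    exact ⟨⟨B, hB, mod_cast convexHull_nonempty_iff.1 hne.left⟩, hne⟩
  choose next hnext using step
  obtain ⟨B₀, hB₀, hne₀⟩ := exists_radon_subset hσ₀
  let B : ∀ i : Fin (n + 1), {B : Finset E // B ⊆ σ i ∧ B.Nonempty} :=
    Fin.induction ⟨B₀, hB₀, mod_cast convexHull_nonempty_iff.1 hne₀.left⟩ next
  refine ⟨fun i ↦ B i, fun i ↦ (B i).2.1, Fin.cases ?_ fun i ↦ ?_⟩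
  · exact hne₀.mono
      (Set.inter_subset_inter_right _ (convexHull_mono (coe_subset.2 subset_union_left)))
  · have hpred : i.succ - 1 = i.castSucc := by
      rw [← Fin.coeSucc_eq_succ, add_sub_cancel_right]
    rw [hpred]
    exact hnext i (B i.castSucc)

end Radon

lemma exists_isCyclePartition_of_blocks {m : ℕ} {S : Finset E} {σ : Fin (m + 4) → Finset E}
    (hS : ∀ x, x ∈ S ↔ ∃ i, x ∈ σ i) (hdisj : Pairwise (Disjoint on σ))
    (hσ : ∀ i, finrank 𝕜 E + 1 ≤ #(σ i)) (hσ₀ : finrank 𝕜 E + 2 ≤ #(σ 0))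
    (hsep : ∀ i j, i < j → ¬ (cycleGraph (m + 4)).Adj i j →
      Disjoint (convexHull 𝕜 (σ (i - 1) ∪ σ i : Set E))
        (convexHull 𝕜 (σ (j - 1) ∪ σ j : Set E))) :
    ∃ P : Fin (m + 4) → Finset E, IsCyclePartition 𝕜 S P := by
  classical
  obtain ⟨B, hBσ, hB⟩ := exists_radon_cycle σ (fun i ↦ hdisj Fin.castSucc_lt_succ.ne) hσ hσ₀
  let P (i : Fin (m + 4)) : Finset E := σ i \ B i ∪ B (i - 1)
  have hP (i x) : x ∈ P i ↔ x ∈ σ i \ B i ∨ x ∈ B (i - 1) := mem_union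
  have hBne (i) : (B i).Nonempty := mod_cast convexHull_nonempty_iff.1 (hB i).left
  have hσ_unique {i j x} (hi : x ∈ σ i) (hj : x ∈ σ j) : i = j :=
    hdisj.eq fun h ↦ Finset.disjoint_left.1 h hi hj
  refine ⟨P, .of_disjoint (by lia) (fun i ↦ (hBne (i - 1)).mono subset_union_right) ?_ ?_ ?_ ?_⟩
  · intro i j hij
    refine Finset.disjoint_left.2 fun x hi hj ↦ hij ?_
    rcases (hP i x).1 hi with hi | hi <;> rcases (hP j x).1 hj with hj | hj
    · exact hσ_unique (mem_sdiff.1 hi).1 (mem_sdiff.1 hj).1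
    · obtain rfl := hσ_unique (mem_sdiff.1 hi).1 (hBσ _ hj)
      exact absurd hj (mem_sdiff.1 hi).2
    · obtain rfl := hσ_unique (mem_sdiff.1 hj).1 (hBσ _ hi)
      exact absurd hi (mem_sdiff.1 hj).2
    · exact sub_left_injective (hσ_unique (hBσ _ hi) (hBσ _ hj))
  · refine fun x ↦ (hS x).trans ⟨fun ⟨i, hi⟩ ↦ ?_, fun ⟨i, hi⟩ ↦ ?_⟩
    · by_cases hx : x ∈ B i
      · exact ⟨i + 1, (hP _ x).2 (.inr (by rwa [add_sub_cancel_right]))⟩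
      · exact ⟨i, (hP i x).2 (.inl (mem_sdiff.2 ⟨hi, hx⟩))⟩
    · exact ((hP i x).1 hi).elim (fun h ↦ ⟨i, (mem_sdiff.1 h).1⟩) fun h ↦ ⟨i - 1, hBσ _ h⟩
  · intro i j hij
    obtain rfl : i = j - 1 := by rw [← hij, sub_sub_cancel]
    rw [Set.inter_comm]
    exact (hB (j - 1)).mono
      (Set.inter_subset_inter_left _ (convexHull_mono fun x hx ↦ (hP j x).2 (.inr hx)))
  · refine fun i j hij h ↦ (hsep i j hij h).mono (convexHull_mono ?_) (convexHull_mono ?_)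
    all_goals
      intro x hx
      exact ((hP _ x).1 hx).elim (fun h ↦ .inr (mem_sdiff.1 h).1) fun h ↦ .inl (hBσ _ h)

end Convexity

section OrderStatistic

variable {α β : Type*} [LinearOrder β] {T : Finset α} {f : α → β} {k : ℕ}

lemma nonempty_of_mem_powersetCard_succ {J : Finset α} (hJ : J ∈ T.powersetCard (k + 1)) :
    J.Nonempty :=
  card_pos.1 ((mem_powersetCard.1 hJ).2 ▸ k.succ_pos)

/-- The `k`-th smallest value of `f` on `T`, counted from `0` and with multiplicity. The min-max
form makes its continuity in `f` evident. -/
def orderStatistic (T : Finset α) (f : α → β) (k : ℕ) (hk : k < #T) : β :=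
  (T.powersetCard (k + 1)).attach.inf' (attach_nonempty_iff.2 (powersetCard_nonempty.2 hk))
    fun J ↦ J.1.sup' (nonempty_of_mem_powersetCard_succ J.2) f

lemma card_filter_lt_orderStatistic (hk : k < #T) :
    #{x ∈ T | f x < orderStatistic T f k hk} ≤ k := by
  by_contra! hcard
  obtain ⟨J, hJ, hJk⟩ := exists_subset_card_eq (Nat.succ_le_of_lt hcard)
  have hJT : J ∈ T.powersetCard (k + 1) :=
    mem_powersetCard.2 ⟨hJ.trans (filter_subset _ _), hJk⟩
  have hsup := (sup'_lt_iff (nonempty_of_mem_powersetCard_succ hJT)).2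
    fun x hx ↦ (mem_filter.1 (hJ hx)).2
  exact hsup.not_ge (inf'_le _ (mem_attach _ ⟨J, hJT⟩))

lemma lt_card_filter_le_orderStatistic (hk : k < #T) :
    k < #{x ∈ T | f x ≤ orderStatistic T f k hk} := by
  obtain ⟨J, -, hJ⟩ := exists_mem_eq_inf' (attach_nonempty_iff.2 (powersetCard_nonempty.2 hk))
    fun J ↦ J.1.sup' (nonempty_of_mem_powersetCard_succ J.2) f
  obtain ⟨hJT, hJk⟩ := mem_powersetCard.1 J.2
  refine (Nat.lt_of_succ_le hJk.ge).trans_le (card_le_card fun x hx ↦ mem_filter.2 ⟨hJT hx, ?_⟩)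
  exact (le_sup' f hx).trans_eq hJ.symm

lemma continuous_orderStatistic {X : Type*} [TopologicalSpace X] [TopologicalSpace β]
    [OrderClosedTopology β] {F : X → α → β} (hF : ∀ x ∈ T, Continuous (F · x)) (hk : k < #T) :
    Continuous fun s ↦ orderStatistic T (F s) k hk := by
  refine Continuous.finset_inf'_apply _ fun J _ ↦ Continuous.finset_sup'_apply _ fun x hx ↦ ?_
  exact hF x ((mem_powersetCard.1 J.2).1 hx)

lemma card_filter_le_eq_add (a : β) :
    #{x ∈ T | f x ≤ a} = #{x ∈ T | f x < a} + #{x ∈ T | f x = a} := by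
  classical
  rw [← card_union_of_disjoint (by grind [Finset.disjoint_left]), ← filter_or]
  simp only [le_iff_lt_or_eq]

lemma exists_mem_eq_orderStatistic (hk : k < #T) : ∃ x ∈ T, f x = orderStatistic T f k hk := by
  have hlt := card_filter_lt_orderStatistic (f := f) hk
  have hle := lt_card_filter_le_orderStatistic (f := f) hk
  have hadd := card_filter_le_eq_add (T := T) (f := f) (orderStatistic T f k hk)
  obtain ⟨x, hx⟩ := card_pos.1 (show 0 < #{x ∈ T | f x = orderStatistic T f k hk} by lia)
  exact ⟨x, mem_filter.1 hx⟩

lemma orderStatistic_le_of_forall_le {U : Finset α} {l : ℕ} (hk : k < #T) (hl : l < #U)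
    (h : ∀ x ∈ T, ∀ y ∈ U, f x ≤ f y) : orderStatistic T f k hk ≤ orderStatistic U f l hl := by
  obtain ⟨x, hx, hxk⟩ := exists_mem_eq_orderStatistic (f := f) hk
  obtain ⟨y, hy, hyl⟩ := exists_mem_eq_orderStatistic (f := f) hl
  exact hxk ▸ hyl ▸ h x hx y hy

lemma exists_card_filter_le_eq (hf : Set.InjOn f T) (hk : k < #T) :
    ∃ a, #{x ∈ T | f x ≤ a} = k + 1 := by
  refine ⟨orderStatistic T f k hk, ?_⟩
  have hlt := card_filter_lt_orderStatistic (f := f) hk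
  have hle := lt_card_filter_le_orderStatistic (f := f) hk
  have hadd := card_filter_le_eq_add (T := T) (f := f) (orderStatistic T f k hk)
  have hone : #{x ∈ T | f x = orderStatistic T f k hk} ≤ 1 :=
    card_le_one.2 fun x hx y hy ↦ hf (mem_filter.1 hx).1 (mem_filter.1 hy).1
      ((mem_filter.1 hx).2.trans (mem_filter.1 hy).2.symm)
  lia

lemma exists_monotone_fin_le_card_fiber (hf : Set.InjOn f T) {r : ℕ} (hr : 0 < r) (N : ℕ)
    (hT : (N + 1) * r ≤ #T) :
    ∃ ρ : β → Fin (N + 1), Monotone ρ ∧ ∀ k, r ≤ #{x ∈ T | ρ (f x) = k} := by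
  induction N generalizing T with
  | zero => exact ⟨fun _ ↦ 0, monotone_const, fun k ↦ by simpa [Fin.fin_one_eq_zero k] using hT⟩
  | succ N ih =>
    obtain ⟨k, rfl⟩ := Nat.exists_eq_add_of_lt hr
    obtain ⟨a, ha⟩ := exists_card_filter_le_eq (k := k) hf (by lia)
    have hsplit := card_filter_add_card_filter_not (s := T) (f · ≤ a)
    obtain ⟨ρ, hρ, hρcard⟩ := ih (T := {x ∈ T | ¬ f x ≤ a})
      (hf.mono (coe_subset.2 (filter_subset _ _))) (by lia)
    refine ⟨fun b ↦ if b ≤ a then 0 else (ρ b).succ, fun b c hbc ↦ ?_, Fin.cases ?_ fun i ↦ ?_⟩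
    · by_cases hc : c ≤ a
      · simp [hc, hbc.trans hc]
      · by_cases hb : b ≤ a <;> simp [hb, hc, hρ hbc]
    · refine le_of_le_of_eq (by lia) (ha.symm.trans (congrArg card (filter_congr fun x _ ↦ ?_)))
      simp
    · refine (hρcard i).trans (card_le_card fun x hx ↦ ?_)
      simp_all

end OrderStatistic

section HamSandwich

variable {α : Type*} {L U : Finset α} {g h : α → ℝ}

lemma exists_forall_sub_le_mul_sub (hLU : ∀ x ∈ L, ∀ y ∈ U, g x < g y) (h : α → ℝ) :
    ∃ s : ℝ, ∀ x ∈ L, ∀ y ∈ U, h y - h x ≤ s * (g y - g x) := by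
  obtain ⟨s, hs⟩ := ((L ×ˢ U).image fun z ↦ (h z.2 - h z.1) / (g z.2 - g z.1)).exists_le
  refine ⟨s, fun x hx y hy ↦ ?_⟩
  rw [← div_le_iff₀ (sub_pos.2 (hLU x hx y hy))]
  exact hs _ (mem_image.2 ⟨(x, y), mem_product.2 ⟨hx, hy⟩, rfl⟩)

lemma exists_orderStatistic_eq (hLU : ∀ x ∈ L, ∀ y ∈ U, g x < g y) {j k : ℕ} (hj : j < #L)
    (hk : k < #U) :
    ∃ s : ℝ, orderStatistic L (fun x ↦ h x - s * g x) j hj =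
      orderStatistic U (fun x ↦ h x - s * g x) k hk := by
  obtain ⟨s₀, hs₀⟩ := exists_forall_sub_le_mul_sub hLU (-h)
  obtain ⟨s₁, hs₁⟩ := exists_forall_sub_le_mul_sub hLU h
  have hcont (x : α) : Continuous fun s : ℝ ↦ h x - s * g x := by fun_prop
  -- At extreme slopes `s`, all values of `h - s * g` on `L` lie on one side of those on `U`.
  obtain ⟨s, hs⟩ := mem_range_of_exists_le_of_exists_ge
    ((continuous_orderStatistic (fun x _ ↦ hcont x) hj).sub
      (continuous_orderStatistic (fun x _ ↦ hcont x) hk))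
    ⟨-s₀, sub_nonpos.2 <| orderStatistic_le_of_forall_le hj hk fun x hx y hy ↦ by
      have := hs₀ x hx y hy
      simp only [Pi.neg_apply] at this
      linarith⟩
    ⟨s₁, sub_nonneg.2 <| orderStatistic_le_of_forall_le hk hj fun y hy x hx ↦ by
      linarith [hs₁ x hx y hy]⟩
  exact ⟨s, sub_eq_zero.1 hs⟩

lemma exists_line_card_le_eq {S : Finset α} (hline : ∀ s t, #{x ∈ S | h x - s * g x = t} ≤ 2)
    {e : ℝ} {j k : ℕ} (hj : j < #{x ∈ S | g x ≤ e}) (hk : k < #{x ∈ S | e < g x}) :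
    ∃ s t : ℝ, #{x ∈ S | g x ≤ e ∧ h x - s * g x ≤ t} = j + 1 ∧
      #{x ∈ S | e < g x ∧ h x - s * g x ≤ t} = k + 1 := by
  obtain ⟨s, hs⟩ := exists_orderStatistic_eq (g := g) (h := h)
    (fun x hx y hy ↦ (mem_filter.1 hx).2.trans_lt (mem_filter.1 hy).2) hj hk
  refine ⟨s, orderStatistic {x ∈ S | g x ≤ e} (fun x ↦ h x - s * g x) j hj, ?_⟩
  have hLlt := card_filter_lt_orderStatistic (f := fun x ↦ h x - s * g x) hj
  have hLle := lt_card_filter_le_orderStatistic (f := fun x ↦ h x - s * g x) hj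
  have hUlt := card_filter_lt_orderStatistic (f := fun x ↦ h x - s * g x) hk
  have hUle := lt_card_filter_le_orderStatistic (f := fun x ↦ h x - s * g x) hk
  rw [← hs] at hUlt hUle
  generalize orderStatistic {x ∈ S | g x ≤ e} (fun x ↦ h x - s * g x) j hj = t at *
  have hL := card_filter_le_eq_add (T := {x ∈ S | g x ≤ e}) (f := fun x ↦ h x - s * g x) t
  have hU := card_filter_le_eq_add (T := {x ∈ S | e < g x}) (f := fun x ↦ h x - s * g x) t
  have htwo := hline s t
  rw [← card_filter_add_card_filter_not (g · ≤ e)] at htwo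
  simp only [not_le] at htwo
  rw [← filter_comm (g · ≤ e), ← filter_comm (e < g ·)] at htwo
  simp only [← filter_filter]
  -- The line carries a point of each side of `g = e`, hence exactly one.
  lia

end HamSandwich

section Generic

open Filter in
lemma eventually_cofinite_injOn_div {α K : Type*} [Field K] {T : Finset α} {p r : α → K}
    (hp : Set.InjOn p T) (hr : ∀ x ∈ T, r x ≠ 0) :
    ∀ᶠ e in cofinite, Set.InjOn (fun x ↦ r x / (p x - e)) T := by
  simp only [Set.InjOn, mem_coe]
  refine T.eventually_all.2 fun x hx ↦ T.eventually_all.2 fun y hy ↦ ?_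
  by_cases hxy : x = y
  · exact .of_forall fun _ _ ↦ hxy
  have hne : ∀ᶠ e in cofinite, e ≠ (p x * r y - p y * r x) / (r y - r x) :=
    (Set.finite_singleton _).subset fun _ h ↦ not_not.1 h
  filter_upwards [hne] with e he heq
  have hxr := hr x hx
  have hyr := hr y hy
  have hinv : (p x - e) / r x = (p y - e) / r y := by simpa using congrArg (·⁻¹) heq
  rw [div_eq_div_iff hxr hyr] at hinv
  by_cases hrr : r y - r x = 0
  · rw [sub_eq_zero.1 hrr] at hinv
    exact hp hx hy (sub_left_injective (mul_right_cancel₀ hxr hinv))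
  · exact absurd ((eq_div_iff hrr).2 (by linear_combination -hinv)) he

variable {K E : Type*} [Field K] [AddCommGroup E] [Module K E]

lemma not_collinear_of_forall_affineIndependent {S : Finset E} {k : ℕ} (hk : 3 ≤ k)
    (hkS : k ≤ #S) (hS : ∀ W ⊆ S, #W = k → AffineIndependent K (fun x : W ↦ (x : E)))
    {x y z : E} (hx : x ∈ S) (hy : y ∈ S) (hz : z ∈ S) (hxy : x ≠ y) (hxz : x ≠ z) (hyz : y ≠ z) :
    ¬ Collinear K {x, y, z} := by
  classical
  obtain ⟨W, hxyzW, hWS, hWk⟩ := exists_subsuperset_card_eq (s := {x, y, z}) (t := S) (by grind)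
    (by rwa [card_eq_three.2 ⟨x, y, z, hxy, hxz, hyz, rfl⟩]) hkS
  rw [← affineIndependent_iff_not_collinear_set]
  refine ((hS W hWS hWk).mono (Set.range_subset_iff.2 ?_)).of_set_of_injective ?_
  · simpa [Fin.forall_fin_succ, insert_subset_iff] using hxyzW
  · simp [Function.Injective, Fin.forall_fin_succ, hxy, hxz, hyz, hxy.symm, hxz.symm, hyz.symm]

lemma smul_sub_smul_ne_zero_of_not_collinear {x y z : E} (hxyz : ¬ Collinear K {x, y, z})
    {g : Dual K E} (hg : g (y - x) ≠ 0) : g (y - x) • (z - x) - g (z - x) • (y - x) ≠ 0 := by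
  refine fun h ↦ hxyz ((collinear_iff_of_mem (p₀ := x) (by simp)).2 ⟨y - x, ?_⟩)
  have hz : z = ((g (y - x))⁻¹ * g (z - x)) • (y - x) +ᵥ x := by
    rw [mul_smul, ← sub_eq_zero.1 h, inv_smul_smul₀ hg, vadd_eq_add, sub_add_cancel]
  simp only [Set.mem_insert_iff, Set.mem_singleton_iff, forall_eq_or_imp, forall_eq]
  exact ⟨⟨0, by simp⟩, ⟨1, by simp⟩, _, hz⟩

variable [Infinite K]

lemma exists_dual_injOn (S : Finset E) : ∃ g : Dual K E, Set.InjOn g S := by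
  obtain ⟨g, hg⟩ := exists_dual_forall_apply_ne_zero (K := K)
    (fun p : {p : S × S // p.1 ≠ p.2} ↦ (p.1.1 - p.1.2 : E))
    fun p ↦ sub_ne_zero.2 (Subtype.coe_ne_coe.2 p.2)
  refine ⟨g, fun x hx y hy hxy ↦ ?_⟩
  by_contra hne
  exact hg ⟨(⟨x, hx⟩, ⟨y, hy⟩), by simpa⟩ (by simp [hxy])

lemma exists_dual_card_line_le_two [DecidableEq K] {S : Finset E}
    (hS : ∀ x ∈ S, ∀ y ∈ S, ∀ z ∈ S, x ≠ y → x ≠ z → y ≠ z → ¬ Collinear K {x, y, z})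
    {g : Dual K E} (hg : Set.InjOn g S) :
    ∃ h : Dual K E, ∀ s t, #{x ∈ S | h x - s * g x = t} ≤ 2 := by
  obtain ⟨h, hh⟩ := exists_dual_forall_apply_ne_zero (K := K)
    (fun p : {p : S × S × S // p.1 ≠ p.2.1 ∧ p.1 ≠ p.2.2 ∧ p.2.1 ≠ p.2.2} ↦
      g (p.1.2.1 - p.1.1) • (p.1.2.2 - p.1.1 : E) - g (p.1.2.2 - p.1.1) • (p.1.2.1 - p.1.1 : E))
    fun ⟨(x, y, z), hxy, hxz, hyz⟩ ↦ smul_sub_smul_ne_zero_of_not_collinear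
      (hS x x.2 y y.2 z z.2 (Subtype.coe_ne_coe.2 hxy) (Subtype.coe_ne_coe.2 hxz)
        (Subtype.coe_ne_coe.2 hyz))
      (by rw [map_sub]; exact sub_ne_zero.2 fun h ↦ hxy (Subtype.ext (hg y.2 x.2 h)).symm)
  refine ⟨h, fun s t ↦ ?_⟩
  by_contra! hcard
  obtain ⟨x, hx, y, hy, z, hz, hxy, hxz, hyz⟩ := two_lt_card.1 hcard
  simp only [mem_filter] at hx hy hz
  refine hh ⟨(⟨x, hx.1⟩, ⟨y, hy.1⟩, ⟨z, hz.1⟩), by simpa using ⟨hxy, hxz, hyz⟩⟩ ?_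
  simp only [map_sub, map_smul, smul_eq_mul]
  linear_combination (g y - g x) * (hz.2 - hx.2) - (g z - g x) * (hy.2 - hx.2)

end Generic

section Quadrants

lemma card_eq_sum_card_quadrant {α : Type*} (S : Finset α) (u v : α → ℝ) :
    #S = #{x ∈ S | u x ≤ 0 ∧ v x ≤ 0} + #{x ∈ S | u x ≤ 0 ∧ 0 < v x} +
      (#{x ∈ S | 0 < u x ∧ v x ≤ 0} + #{x ∈ S | 0 < u x ∧ 0 < v x}) := by
  have hu := card_filter_add_card_filter_not (s := S) (u · ≤ 0)
  have hneg := card_filter_add_card_filter_not (s := {x ∈ S | u x ≤ 0}) (v · ≤ 0)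
  have hpos := card_filter_add_card_filter_not (s := {x ∈ S | 0 < u x}) (v · ≤ 0)
  simp only [filter_filter, not_le] at hu hneg hpos
  lia

open Filter Topology in
lemma eventually_nhdsGT_le_iff {α : Type*} (S : Finset α) (g : α → ℝ) (a : ℝ) :
    ∀ᶠ e in 𝓝[>] a, ∀ x ∈ S, g x ≤ e ↔ g x ≤ a := by
  refine S.eventually_all.2 fun x _ ↦ ?_
  rcases le_or_gt (g x) a with h | h
  · filter_upwards [self_mem_nhdsWithin] with e he
    exact iff_of_true (h.trans (le_of_lt he)) h
  · filter_upwards [eventually_nhdsWithin_of_eventually_nhds (eventually_lt_nhds h)] with e he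
    exact iff_of_false he.not_ge h.not_ge

open Filter Topology in
lemma exists_card_quadrant_eq {α : Type*} {S : Finset α} {g h : α → ℝ} (hg : Set.InjOn g S)
    (hline : ∀ s t, #{x ∈ S | h x - s * g x = t} ≤ 2) {a b c : ℕ} (ha : 0 < a) (hb : 0 < b)
    (habc : a + b + c ≤ #S) :
    ∃ e s t : ℝ, #{x ∈ S | g x ≤ e ∧ h x - s * g x ≤ t} = a ∧
      #{x ∈ S | e < g x ∧ h x - s * g x ≤ t} = b ∧ #{x ∈ S | g x ≤ e ∧ t < h x - s * g x} = c ∧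
      Set.InjOn (fun x ↦ (h x - s * g x - t) / (g x - e)) {x ∈ S | t < h x - s * g x} := by
  obtain ⟨e₀, he₀⟩ := exists_card_filter_le_eq (k := a + c - 1) hg (by lia)
  have hsplit := card_filter_add_card_filter_not (s := S) (g · ≤ e₀)
  simp only [not_le] at hsplit
  obtain ⟨s, t, hL, hU⟩ := exists_line_card_le_eq (e := e₀) (j := a - 1) (k := b - 1) hline
    (by lia) (by lia)
  have hLsplit := card_filter_add_card_filter_not (s := {x ∈ S | g x ≤ e₀})
    fun x ↦ h x - s * g x ≤ t
  simp only [not_le, filter_filter] at hLsplit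
  -- Moving `e` slightly off `e₀` changes no count but makes the slopes from the apex distinct.
  have hinj : ∀ᶠ e in 𝓝[>] e₀,
      Set.InjOn (fun x ↦ (h x - s * g x - t) / (g x - e))
        ({x ∈ S | t < h x - s * g x} : Finset α) :=
    (nhdsGT_le_nhdsNE e₀).trans (nhdsNE_le_cofinite e₀) <| eventually_cofinite_injOn_div
      (hg.mono (coe_subset.2 (filter_subset _ _))) fun x hx ↦ (sub_pos.2 (mem_filter.1 hx).2).ne'
  obtain ⟨e, hinj, he⟩ := (hinj.and (eventually_nhdsGT_le_iff S g e₀)).exists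
  have he' : ∀ x ∈ S, e < g x ↔ e₀ < g x := fun x hx ↦ by simpa using (he x hx).not
  refine ⟨e, s, t, ?_, ?_, ?_, by simpa using hinj⟩
  · rw [filter_congr fun x hx ↦ and_congr_left' (he x hx)]
    lia
  · rw [filter_congr fun x hx ↦ and_congr_left' (he' x hx)]
    lia
  · rw [filter_congr fun x hx ↦ and_congr_left' (he x hx)]
    lia

variable {E : Type*} [AddCommGroup E] [Module ℝ E]

lemma exists_affineMap_card_quadrant_eq {S : Finset E}
    (hS : ∀ x ∈ S, ∀ y ∈ S, ∀ z ∈ S, x ≠ y → x ≠ z → y ≠ z → ¬ Collinear ℝ {x, y, z})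
    {a b c : ℕ} (ha : 0 < a) (hb : 0 < b) (habc : a + b + c ≤ #S) :
    ∃ u v : E →ᵃ[ℝ] ℝ, #{x ∈ S | u x ≤ 0 ∧ v x ≤ 0} = a ∧ #{x ∈ S | 0 < u x ∧ v x ≤ 0} = b ∧
      #{x ∈ S | u x ≤ 0 ∧ 0 < v x} = c ∧ Set.InjOn (fun x ↦ v x / u x) {x ∈ S | 0 < v x} := by
  obtain ⟨g, hg⟩ := exists_dual_injOn (K := ℝ) S
  obtain ⟨h, hh⟩ := exists_dual_card_line_le_two hS hg
  obtain ⟨e, s, t, hest⟩ := exists_card_quadrant_eq hg hh ha hb habc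
  refine ⟨g.toAffineMap - AffineMap.const ℝ E e,
    (h - s • g).toAffineMap - AffineMap.const ℝ E t, ?_⟩
  simpa using hest

end Quadrants

section Sectors

variable {α : Type*}

lemma exists_ge_forall_le_iff {β : Type*} [LinearOrder β] {T : Finset α} {f : α → β} {b : β}
    (hT : ∀ x ∈ T, b < f x) {s : Set β} (hs : IsLowerSet s) :
    ∃ c, b ≤ c ∧ ∀ x ∈ T, f x ≤ c ↔ f x ∈ s := by
  classical
  obtain ⟨c, hc, hmax⟩ := exists_max_image (insert b {a ∈ T.image f | a ∈ s}) id
    (insert_nonempty _ _)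
  refine ⟨c, hmax b (mem_insert_self _ _), fun x hx ↦ ⟨fun hxc ↦ ?_, fun hxs ↦ ?_⟩⟩
  · rcases mem_insert.1 hc with rfl | hc
    · exact absurd (hT x hx) hxc.not_gt
    · exact hs hxc (mem_filter.1 hc).2
  · exact hmax _ (mem_insert_of_mem (mem_filter.2 ⟨mem_image_of_mem f hx, hxs⟩))

variable {m : ℕ} {u v : α → ℝ} {ρ : ℝ → Fin (m + 1)} {x : α}

/-- The sector containing `x` when the plane with coordinates `u`, `v` is divided by rays from the
origin and the sectors are numbered counterclockwise from the quadrant `u ≤ 0`, `v ≤ 0`. The open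
quadrant `0 < u`, `0 < v` is subdivided into the sectors `2, …, m + 2` by the slope `v / u`. -/
noncomputable def sector (u v : α → ℝ) (ρ : ℝ → Fin (m + 1)) (x : α) : ℕ :=
  if u x ≤ 0 then if v x ≤ 0 then 0 else m + 3
  else if v x ≤ 0 then 1 else ρ (v x / u x) + 2

lemma sector_eq_zero_iff : sector u v ρ x = 0 ↔ u x ≤ 0 ∧ v x ≤ 0 := by
  grind [sector]

lemma sector_eq_one_iff : sector u v ρ x = 1 ↔ 0 < u x ∧ v x ≤ 0 := by
  grind [sector]

lemma sector_eq_add_two_iff {k : Fin (m + 1)} :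
    sector u v ρ x = k + 2 ↔ (0 < u x ∧ 0 < v x) ∧ ρ (v x / u x) = k := by
  grind [sector]

lemma sector_eq_add_three_iff : sector u v ρ x = m + 3 ↔ u x ≤ 0 ∧ 0 < v x := by
  grind [sector]

lemma sector_eq_zero_or_eq_add_three_iff :
    sector u v ρ x = 0 ∨ sector u v ρ x = m + 3 ↔ u x ≤ 0 := by
  grind [sector]

lemma sector_le_one_iff : sector u v ρ x ≤ 1 ↔ v x ≤ 0 := by
  grind [sector]

lemma sector_lt : sector u v ρ x < m + 4 := by
  grind [sector]

lemma exists_le_card_sector {S : Finset α} {r : ℕ} (hr : 0 < r)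
    (hinj : Set.InjOn (fun x ↦ v x / u x) {x ∈ S | 0 < v x})
    (hzero : r ≤ #{x ∈ S | u x ≤ 0 ∧ v x ≤ 0}) (hone : r ≤ #{x ∈ S | 0 < u x ∧ v x ≤ 0})
    (hlast : r ≤ #{x ∈ S | u x ≤ 0 ∧ 0 < v x})
    (hfan : (m + 1) * r ≤ #{x ∈ S | 0 < u x ∧ 0 < v x}) :
    ∃ ρ : ℝ → Fin (m + 1), Monotone ρ ∧
      ∀ i : Fin (m + 4), r ≤ #{x ∈ S | sector u v ρ x = i} := by
  obtain ⟨ρ, hρ, hcard⟩ :=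
    exists_monotone_fin_le_card_fiber (hinj.mono fun x hx ↦ by simp_all) hr m hfan
  refine ⟨ρ, hρ, fun i ↦ ?_⟩
  obtain h | h | h | ⟨k, h⟩ : (i : ℕ) = 0 ∨ (i : ℕ) = 1 ∨ (i : ℕ) = m + 3 ∨
      ∃ k : Fin (m + 1), (i : ℕ) = k + 2 := by
    by_cases h : 2 ≤ (i : ℕ) ∧ (i : ℕ) < m + 3
    · exact .inr (.inr (.inr ⟨⟨i - 2, by lia⟩, by grind⟩))
    · lia
  all_goals rw [h]
  · simpa only [sector_eq_zero_iff]
  · simpa only [sector_eq_one_iff]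
  · simpa only [sector_eq_add_three_iff]
  · simpa only [sector_eq_add_two_iff, ← filter_filter] using hcard k

lemma exists_slope_separating_sectors (hρ : Monotone ρ) (S : Finset α) {k : ℕ} (hk : 1 ≤ k)
    (hkm : k ≤ m + 2) :
    ∃ c : ℝ, ∀ x ∈ S, (1 ≤ sector u v ρ x → sector u v ρ x ≤ k → v x - c * u x ≤ 0) ∧
      (k < sector u v ρ x → 0 < v x - c * u x) := by
  obtain ⟨c, hc₀, hc⟩ := exists_ge_forall_le_iff (T := {x ∈ S | 0 < u x ∧ 0 < v x}) (b := 0)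
    (fun x hx ↦ div_pos (mem_filter.1 hx).2.2 (mem_filter.1 hx).2.1) (s := {a | (ρ a : ℕ) + 2 ≤ k})
    fun a b hba (ha : _ ≤ k) ↦ (Nat.add_le_add_right (hρ hba) 2).trans ha
  refine ⟨c, fun x hx ↦ ?_⟩
  rcases le_or_gt (u x) 0 with hu | hu <;> rcases le_or_gt (v x) 0 with hv | hv
  · have hsec := sector_eq_zero_iff (ρ := ρ).2 ⟨hu, hv⟩
    lia
  · have hsec := sector_eq_add_three_iff (ρ := ρ).2 ⟨hu, hv⟩
    exact ⟨by lia, fun _ ↦ by linarith [mul_nonpos_of_nonneg_of_nonpos hc₀ hu]⟩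
  · have hsec := sector_eq_one_iff (ρ := ρ).2 ⟨hu, hv⟩
    exact ⟨fun _ _ ↦ by linarith [mul_nonneg hc₀ hu.le], by lia⟩
  · have hsec := sector_eq_add_two_iff (ρ := ρ).2 ⟨⟨hu, hv⟩, rfl⟩
    have hxc : v x / u x ≤ c ↔ (ρ (v x / u x) : ℕ) + 2 ≤ k :=
      hc x (mem_filter.2 ⟨hx, hu, hv⟩)
    rw [div_le_iff₀ hu, ← hsec] at hxc
    exact ⟨fun _ h ↦ sub_nonpos.2 (hxc.2 h), fun h ↦ sub_pos.2 (not_le.1 (hxc.not.2 h.not_ge))⟩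

variable {E : Type*} [AddCommGroup E] [Module ℝ E] {u v : E →ᵃ[ℝ] ℝ}

lemma exists_affineMap_separating_sectors (hρ : Monotone ρ) (S : Finset E) {i j : Fin (m + 4)}
    (hij : i < j) (hadj : ¬ (cycleGraph (m + 4)).Adj i j) :
    ∃ φ : E →ᵃ[ℝ] ℝ, ∀ x ∈ S,
      (sector u v ρ x = (i - 1 : Fin (m + 4)) ∨ sector u v ρ x = i → φ x ≤ 0) ∧
      (sector u v ρ x = (j - 1 : Fin (m + 4)) ∨ sector u v ρ x = j → 0 < φ x) := by
  rw [cycleGraph_adj_iff_val hij.ne] at hadj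
  have hij' : (i : ℕ) < j := hij
  have hj : ((j - 1 : Fin (m + 4)) : ℕ) = j - 1 := by
    rw [Fin.coe_sub_one, if_neg (Fin.ne_zero_of_lt hij)]
  by_cases hi₀ : i = 0
  · subst hi₀
    refine ⟨u, fun x _ ↦ ?_⟩
    rw [hj, Fin.coe_sub_one, if_pos rfl, Fin.val_zero, ← not_le,
      ← sector_eq_zero_or_eq_add_three_iff (v := v) (ρ := ρ)]
    lia
  have hi : ((i - 1 : Fin (m + 4)) : ℕ) = i - 1 := by rw [Fin.coe_sub_one, if_neg hi₀]
  have hi₀' : (i : ℕ) ≠ 0 := Fin.val_ne_zero_iff.2 hi₀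
  rw [hi, hj]
  by_cases hi₁ : (i : ℕ) = 1
  · refine ⟨v, fun x _ ↦ ?_⟩
    rw [← not_le, ← sector_le_one_iff (u := u) (ρ := ρ)]
    lia
  · obtain ⟨c, hc⟩ := exists_slope_separating_sectors (u := u) (v := v) hρ S (k := i) (by lia)
      (by lia)
    refine ⟨v - c • u, fun x hx ↦ ?_⟩
    have hxc := hc x hx
    exact ⟨fun h ↦ hxc.1 (by lia) (by lia), fun h ↦ hxc.2 (by lia)⟩

lemma exists_isCyclePartition_of_sectors [FiniteDimensional ℝ E] {m : ℕ} {S : Finset E}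
    {u v : E →ᵃ[ℝ] ℝ} {ρ : ℝ → Fin (m + 1)} (hρ : Monotone ρ)
    (hcard : ∀ i : Fin (m + 4), finrank ℝ E + 1 ≤ #{x ∈ S | sector u v ρ x = i})
    (hcard₀ : finrank ℝ E + 2 ≤ #{x ∈ S | u x ≤ 0 ∧ v x ≤ 0}) :
    ∃ P : Fin (m + 4) → Finset E, IsCyclePartition ℝ S P := by
  refine exists_isCyclePartition_of_blocks
    (σ := fun i : Fin (m + 4) ↦ {x ∈ S | sector u v ρ x = i}) (fun x ↦ ?_) (fun i j hij ↦ ?_) hcard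
    ?_ fun i j hij hadj ↦ ?_
  · simp only [mem_filter, exists_and_left]
    exact (and_iff_left ⟨⟨_, sector_lt⟩, rfl⟩).symm
  · exact disjoint_filter.2 fun x _ hi hj ↦ hij (Fin.ext (hi.symm.trans hj))
  · simpa only [Fin.val_zero, sector_eq_zero_iff]
  · obtain ⟨φ, hφ⟩ := exists_affineMap_separating_sectors (u := u) (v := v) hρ S hij hadj
    refine disjoint_convexHull_of_le_of_lt φ 0 (fun x hx ↦ ?_) fun x hx ↦ ?_ <;>
      simp only [Set.mem_union, mem_coe, mem_filter, ← and_or_left] at hx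
    exacts [(hφ x hx.1).1 hx.2, (hφ x hx.1).2 hx.2]

end Sectors

end CyclePartition

open CyclePartition

theorem cycle_partition_induced_general {E : Type*} [AddCommGroup E] [Module ℝ E]
    [FiniteDimensional ℝ E] {n : ℕ} (hn : 4 ≤ n) (S : Finset E) (hcard : n * (finrank ℝ E + 1) < #S)
    (hS : ∀ x ∈ S, ∀ y ∈ S, ∀ z ∈ S, x ≠ y → x ≠ z → y ≠ z → ¬ Collinear ℝ {x, y, z}) :
    ∃ P : Fin n → Finset E, IsCyclePartition ℝ S P := by
  obtain ⟨m, rfl⟩ := Nat.exists_eq_add_of_le' hn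
  rw [show m + 4 = m + 1 + 3 from rfl, add_mul] at hcard
  obtain ⟨u, v, hzero, hone, hlast, hinj⟩ := exists_affineMap_card_quadrant_eq hS
    (a := finrank ℝ E + 2) (b := finrank ℝ E + 1) (c := finrank ℝ E + 1) (by lia) (by lia) (by lia)
  have hsum := card_eq_sum_card_quadrant S u v
  obtain ⟨ρ, hρ, hsector⟩ := exists_le_card_sector (m := m) (Nat.succ_pos (finrank ℝ E)) hinj
    (by lia) hone.ge hlast.ge (by lia)
  exact exists_isCyclePartition_of_sectors hρ hsector hzero.ge

/-- For `n ≥ 4`, `d ≥ 2`, every set of at least `nd + n + 4d` points in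
general position in `ℝ^d` admits a partition into `n` parts `S_0, …, S_{n-1}` whose nerve is
the `n`-cycle: convex hulls of parts intersect iff their indices are cyclically consecutive,
and there are no triple intersections. -/
theorem cycle_partition_induced
    {d n : ℕ} (hd : 2 ≤ d) (hn : 4 ≤ n)
    (S : Finset (Fin d → ℝ)) (hcard : n * d + n + 4 * d ≤ S.card)
    -- general position: any `d+1` points of `S` are affinely independent
    (hgen : ∀ W : Finset (Fin d → ℝ), W ⊆ S → W.card = d + 1 →
      AffineIndependent ℝ (fun x : W => (x : Fin d → ℝ))) :
    ∃ P : Fin n → Finset (Fin d → ℝ),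
      (∀ i, (P i).Nonempty) ∧
      (∀ i j, i ≠ j → Disjoint (P i) (P j)) ∧
      S = Finset.univ.biUnion P ∧
      (∀ i j : Fin n, i ≠ j →
        ((convexHull ℝ (P i : Set (Fin d → ℝ)) ∩
          convexHull ℝ (P j : Set (Fin d → ℝ))).Nonempty ↔
          ((i : ℕ) + 1 = (j : ℕ) ∨ (j : ℕ) + 1 = (i : ℕ) ∨
            ((i : ℕ) = 0 ∧ (j : ℕ) = n - 1) ∨ ((j : ℕ) = 0 ∧ (i : ℕ) = n - 1)))) ∧
      (∀ i j k, i ≠ j → j ≠ k → i ≠ k →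
        convexHull ℝ (P i : Set (Fin d → ℝ)) ∩
          convexHull ℝ (P j : Set (Fin d → ℝ)) ∩
          convexHull ℝ (P k : Set (Fin d → ℝ)) = ∅) := by
  obtain ⟨P, hP⟩ := cycle_partition_induced_general hn S
    (by rw [finrank_fin_fun, mul_add]; lia)
    fun x hx y hy z hz ↦ not_collinear_of_forall_affineIndependent (by lia) (by lia) hgen hx hy hz
  refine ⟨P, hP.nonempty, fun i j hij ↦ hP.disjoint hij, ?_, fun i j hij ↦ ?_,
    hP.inter_inter_eq_empty⟩
  · ext x
    simp [hP.mem_iff]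
  · exact (hP.inter_nonempty_iff i j hij).trans (cycleGraph_adj_iff_val hij)
end

section
/- Let S be a finite set of points in the plane, n ≥ 4, d ≥ 1, with |S| ≥ nd + n + 4d. Then there exists a point p and n closed sectors (angular regions with apex p) partitioning the plane such that: (i) each sector contains at least d+1 points of S in its interior, and (ii) the union of any two adjacent sectors is contained in a closed half-plane (combined angle at most π). -/
open scoped Classical

/-- The closed sector with apex `p` spanned by the directions `u` and `v`
(all nonnegative combinations of the two directions, based at `p`). -/
def Sector (p u v : Fin 2 → ℝ) : Set (Fin 2 → ℝ) :=
  {x | ∃ a b : ℝ, 0 ≤ a ∧ 0 ≤ b ∧ x = p + a • u + b • v}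

/-!
A vertical line and a second, non-vertical line cut `S` into four open quadrants with at least
`d + 1` points each: the vertical line leaves `4d + 1` points on either side, and sliding the slope
of the second line until it passes through the median of both sides is a discrete ham-sandwich
argument. Pushing the apex slightly upwards keeps the quadrants and makes the directions from the
apex to the points of `S` distinct. After a shear the quadrants are right angles.

A quadrant with `N` points splits into any number up to `⌊N / (d + 1)⌋` of sectors with `d + 1`
points each. The rounding loses at most `d` points per quadrant, so `nd + n + 4d` points suffice for
`n` sectors. Every sector has angle at most `π / 2`, so two adjacent ones fit in a half-plane.
-/

open Filter
open scoped Finset Topology Real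

section OrderStatistic

variable {α β : Type*} [LinearOrder β] {T : Finset α} {k : ℕ} {f : α → β} {v : β}

/-- `v` is the `k`-th smallest value (counted with multiplicity, from `1`) of `f` on `T`. -/
def IsOrderStatistic (T : Finset α) (k : ℕ) (f : α → β) (v : β) : Prop :=
  #{x ∈ T | f x < v} < k ∧ k ≤ #{x ∈ T | f x ≤ v}

lemma card_filter_le_eq_card_lt_add_card_eq (T : Finset α) (f : α → β) (v : β) :
    #{x ∈ T | f x ≤ v} = #{x ∈ T | f x < v} + #{x ∈ T | f x = v} := by
  rw [← Finset.card_union_of_disjoint (Finset.disjoint_filter.2 fun _ _ h => h.ne),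
    ← Finset.filter_or]
  simp only [le_iff_lt_or_eq]

lemma card_filter_le_add_card_filter_gt (T : Finset α) (f : α → β) (v : β) :
    #{x ∈ T | f x ≤ v} + #{x ∈ T | v < f x} = #T := by
  simpa only [not_le] using T.card_filter_add_card_filter_not (f · ≤ v)

namespace IsOrderStatistic

lemma card_filter_eq_pos (h : IsOrderStatistic T k f v) : 0 < #{x ∈ T | f x = v} := by
  have := card_filter_le_eq_card_lt_add_card_eq T f v
  have := h.1
  have := h.2
  omega

lemma exists_mem_eq (h : IsOrderStatistic T k f v) : ∃ x ∈ T, f x = v := by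
  simpa [Finset.card_pos, Finset.filter_nonempty_iff] using h.card_filter_eq_pos

lemma le_card_filter_lt_add (h : IsOrderStatistic T k f v) :
    k ≤ #{x ∈ T | f x < v} + #{x ∈ T | f x = v} :=
  h.2.trans_eq (card_filter_le_eq_card_lt_add_card_eq T f v)

lemma card_lt_card_filter_gt_add (h : IsOrderStatistic T k f v) :
    #T < #{x ∈ T | v < f x} + #{x ∈ T | f x = v} + k := by
  have := card_filter_le_eq_card_lt_add_card_eq T f v
  have := card_filter_le_add_card_filter_gt T f v
  have := h.1
  omega

lemma lt_card_filter_lt_and_gt_of_median {d : ℕ} (h : IsOrderStatistic T (2 * d + 1) f v)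
    (hd : 1 ≤ d) (hT : 4 * d + 1 ≤ #T) (hv : #{x ∈ T | f x = v} ≤ 1) :
    d < #{x ∈ T | f x < v} ∧ d < #{x ∈ T | v < f x} := by
  have := h.le_card_filter_lt_add
  have := h.card_lt_card_filter_gt_add
  omega

end IsOrderStatistic

/-- The `k`-th smallest value of `f` on `T`, written as the minimum over the `k`-element subsets
of `T` of the maximum of `f`, an expression that visibly depends continuously on `f`. -/
def orderStatistic (T : Finset α) (k : ℕ) (hk : 0 < k) (hkT : k ≤ #T) (f : α → β) : β :=
  (T.powersetCard k).attach.inf' (by simpa using hkT) fun A =>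
    A.1.sup' (Finset.card_pos.1 (hk.trans_eq (Finset.mem_powersetCard.1 A.2).2.symm)) f

lemma isOrderStatistic_orderStatistic (hk : 0 < k) (hkT : k ≤ #T) (f : α → β) :
    IsOrderStatistic T k f (orderStatistic T k hk hkT f) := by
  constructor
  · by_contra! hcard
    obtain ⟨A, hA, hAk⟩ := Finset.exists_subset_card_eq hcard
    have hAT : A ∈ T.powersetCard k :=
      Finset.mem_powersetCard.2 ⟨hA.trans (Finset.filter_subset _ _), hAk⟩
    have hlt : orderStatistic T k hk hkT f < orderStatistic T k hk hkT f :=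
      (Finset.inf'_lt_iff _).2 ⟨⟨A, hAT⟩, Finset.mem_attach _ _,
        (Finset.sup'_lt_iff _).2 fun x hx => (Finset.mem_filter.1 (hA hx)).2⟩
    exact hlt.false
  · obtain ⟨⟨A, hAT⟩, -, hA⟩ := (Finset.inf'_le_iff _).1 (le_refl (orderStatistic T k hk hkT f))
    obtain ⟨hAT, hAk⟩ := Finset.mem_powersetCard.1 hAT
    exact hAk.ge.trans <| Finset.card_le_card fun x hx =>
      Finset.mem_filter.2 ⟨hAT hx, (Finset.sup'_le_iff _ _).1 hA x hx⟩

lemma continuous_orderStatistic {X : Type*} [TopologicalSpace X] [TopologicalSpace β]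
    [OrderClosedTopology β] {F : X → α → β} (hF : ∀ x, Continuous fun s => F s x) (hk : 0 < k)
    (hkT : k ≤ #T) : Continuous fun s => orderStatistic T k hk hkT (F s) :=
  Continuous.finset_inf'_apply _ fun _ _ => Continuous.finset_sup'_apply _ fun x _ => hF x

end OrderStatistic

lemma eventually_atTop_forall_sub_mul_le {α : Type*} {L R : Finset α} {f : α → ℝ}
    (hLR : ∀ x ∈ L, ∀ y ∈ R, f x < f y) (g : α → ℝ) :
    ∀ᶠ s : ℝ in atTop, ∀ x ∈ L, ∀ y ∈ R, g y - s * f y ≤ g x - s * f x := by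
  simp only [eventually_all_finset]
  intro x hx y hy
  filter_upwards [eventually_ge_atTop ((g y - g x) / (f y - f x))] with s hs
  rw [div_le_iff₀ (sub_pos.2 (hLR x hx y hy))] at hs
  linarith

/-- A discrete ham-sandwich theorem. As the slope `s` runs from `-∞` to `∞`, the level through the
`k`-th point of `L` moves from below to above the level through the `l`-th point of `R`. -/
lemma exists_isOrderStatistic_sub_mul {α : Type*} {L R : Finset α} {k l : ℕ} {f : α → ℝ}
    (hLR : ∀ x ∈ L, ∀ y ∈ R, f x < f y) (g : α → ℝ) (hk : 0 < k) (hkL : k ≤ #L)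
    (hl : 0 < l) (hlR : l ≤ #R) :
    ∃ s t : ℝ, IsOrderStatistic L k (fun x => g x - s * f x) t ∧
      IsOrderStatistic R l (fun x => g x - s * f x) t := by
  have hcont (x : α) : Continuous fun s : ℝ => g x - s * f x := by fun_prop
  have hL (s : ℝ) := isOrderStatistic_orderStatistic hk hkL fun x => g x - s * f x
  have hR (s : ℝ) := isOrderStatistic_orderStatistic hl hlR fun x => g x - s * f x
  obtain ⟨s₁, hs₁⟩ := (eventually_atTop_forall_sub_mul_le hLR g).exists
  obtain ⟨s₂, hs₂⟩ := (eventually_atTop_forall_sub_mul_le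
    (f := fun x => -f x) (fun y hy x hx => neg_lt_neg (hLR x hx y hy)) g).exists
  obtain ⟨s, hs⟩ := intermediate_value_univ₂ (a := -s₂) (b := s₁)
    (continuous_orderStatistic hcont hk hkL) (continuous_orderStatistic hcont hl hlR)
    (by
      obtain ⟨x, hx, hxe⟩ := (hL (-s₂)).exists_mem_eq
      obtain ⟨y, hy, hye⟩ := (hR (-s₂)).exists_mem_eq
      rw [← hxe, ← hye]
      simpa using hs₂ y hy x hx)
    (by
      obtain ⟨x, hx, hxe⟩ := (hL s₁).exists_mem_eq
      obtain ⟨y, hy, hye⟩ := (hR s₁).exists_mem_eq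
      rw [← hxe, ← hye]
      exact hs₁ x hx y hy)
  exact ⟨s, _, hL s, hs ▸ hR s⟩

lemma eventually_nhdsGT_forall_ne_and_lt_iff_le {β : Type*} [LinearOrder β]
    [TopologicalSpace β] [OrderClosedTopology β] (Φ : Finset β) (v : β) :
    ∀ᶠ c in 𝓝[>] v, ∀ x ∈ Φ, x ≠ c ∧ (x < c ↔ x ≤ v) := by
  rw [eventually_all_finset]
  intro x _
  rcases le_or_gt x v with hxv | hvx
  · filter_upwards [self_mem_nhdsWithin] with c hc
    exact ⟨(hxv.trans_lt hc).ne, iff_of_true (hxv.trans_lt hc) hxv⟩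
  · filter_upwards [Ioo_mem_nhdsGT hvx] with c hc
    exact ⟨hc.2.ne', iff_of_false hc.2.not_gt hvx.not_ge⟩

/-- The arcs `(a, b)` of length at most `δ` that have their endpoints off `Φ` and contain at
least `m` points of `Φ`, as a relation between endpoints. A series of this relation is a chain of
consecutive such arcs. -/
def arcs (Φ : Finset ℝ) (δ : ℝ) (m : ℕ) : SetRel ℝ ℝ :=
  {q | q.1 ∉ Φ ∧ q.2 ∉ Φ ∧ q.1 < q.2 ∧ q.2 - q.1 ≤ δ ∧ m ≤ #{φ ∈ Φ | φ ∈ Set.Ioo q.1 q.2}}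

section Arcs

variable {Φ : Finset ℝ} {δ a b c : ℝ} {m k : ℕ}

lemma mem_arcs : (a, b) ∈ arcs Φ δ m ↔
    a ∉ Φ ∧ b ∉ Φ ∧ a < b ∧ b - a ≤ δ ∧ m ≤ #{φ ∈ Φ | φ ∈ Set.Ioo a b} := Iff.rfl

lemma abs_sub_le_of_mem_arcs (h : (a, b) ∈ arcs Φ δ m) : |b - a| ≤ δ := by
  obtain ⟨-, -, hab, hδ, -⟩ := mem_arcs.1 h
  rwa [abs_of_pos (sub_pos.2 hab)]

lemma strictMono_of_relSeries_arcs (σ : RelSeries (arcs Φ δ m)) : StrictMono σ :=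
  Fin.strictMono_iff_lt_succ.2 fun i => (mem_arcs.1 (σ.step i)).2.2.1

lemma card_filter_Ioo_le_add (hb : b ∉ Φ) :
    #{φ ∈ Φ | φ ∈ Set.Ioo a c} ≤
      #{φ ∈ Φ | φ ∈ Set.Ioo a b} + #{φ ∈ Φ | φ ∈ Set.Ioo b c} := by
  refine le_trans (Finset.card_le_card fun φ hφ => ?_) (Finset.card_union_le _ _)
  simp only [Finset.mem_union, Finset.mem_filter, Set.mem_Ioo] at hφ ⊢
  have hne : φ ≠ b := fun h => hb (h ▸ hφ.1)
  rcases lt_or_gt_of_ne hne with h | h <;> tauto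

lemma exists_notMem_card_filter_Ioo_eq (hm : 0 < m)
    (hmab : m ≤ #{φ ∈ Φ | φ ∈ Set.Ioo a b}) :
    ∃ c ∈ Set.Ioo a b, c ∉ Φ ∧ #{φ ∈ Φ | φ ∈ Set.Ioo a c} = m := by
  set Ψ : Finset ℝ := {φ ∈ Φ | φ ∈ Set.Ioo a b} with hΨ
  have hv := isOrderStatistic_orderStatistic hm hmab id
  set v := orderStatistic Ψ m hm hmab id
  obtain ⟨w, hwΨ, hwv : w = v⟩ := hv.exists_mem_eq
  have hvΨ : v ∈ Ψ := hwv ▸ hwΨ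
  obtain ⟨-, hav, hvb⟩ := Finset.mem_filter.1 hvΨ
  obtain ⟨c, hc, hvc, hcb⟩ :=
    ((eventually_nhdsGT_forall_ne_and_lt_iff_le Φ _).and (Ioo_mem_nhdsGT hvb)).exists
  refine ⟨c, ⟨hav.trans hvc, hcb⟩, fun h => (hc c h).1 rfl, ?_⟩
  have hle : ({φ ∈ Φ | φ ∈ Set.Ioo a c} : Finset ℝ) = {φ ∈ Ψ | id φ ≤ v} := by
    ext φ
    simp only [hΨ, Finset.mem_filter, Set.mem_Ioo, id, and_assoc]
    refine and_congr_right fun hφ => and_congr_right fun _ => ?_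
    rw [(hc φ hφ).2]
    exact ⟨fun h => ⟨h.trans_lt hvb, h⟩, And.right⟩
  have heq : #{φ ∈ Ψ | id φ = v} ≤ 1 := Finset.card_le_one.2 fun x hx y hy =>
    (Finset.mem_filter.1 hx).2.trans (Finset.mem_filter.1 hy).2.symm
  have := card_filter_le_eq_card_lt_add_card_eq Ψ id v
  have := hv.1
  have := hv.2
  rw [hle]
  omega

lemma exists_relSeries_arcs_of_mul_le (hm : 0 < m) (hk : 0 < k) (hab : (a, b) ∈ arcs Φ δ m)
    (hkm : k * m ≤ #{φ ∈ Φ | φ ∈ Set.Ioo a b}) :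
    ∃ σ : RelSeries (arcs Φ δ m), σ.head = a ∧ σ.last = b ∧ σ.length = k := by
  induction k, hk using Nat.le_induction generalizing a with
  | base =>
    exact ⟨(RelSeries.singleton _ b).cons a (by simpa), by simp, by simp, by simp⟩
  | succ k hk ih =>
    obtain ⟨ha, hb, -, hδ, -⟩ := mem_arcs.1 hab
    obtain ⟨c, ⟨hac, hcb⟩, hc, hcard⟩ := exists_notMem_card_filter_Ioo_eq hm
      (le_trans (Nat.le_mul_of_pos_left m k.succ_pos) hkm)
    have hkc : k * m ≤ #{φ ∈ Φ | φ ∈ Set.Ioo c b} := by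
      have := card_filter_Ioo_le_add (a := a) (c := b) hc
      rw [add_mul] at hkm
      omega
    obtain ⟨σ, hσc, hσb, hσ⟩ := ih (a := c) (mem_arcs.2 ⟨hc, hb, hcb, by linarith,
      (Nat.le_mul_of_pos_left m hk).trans hkc⟩) hkc
    exact ⟨σ.cons a (hσc ▸ mem_arcs.2 ⟨ha, hc, hac, by linarith, hcard.ge⟩),
      by simp, by simpa, by simpa⟩

/-- An arc with `N` points can be cut into any positive number of arcs up to `⌊N / m⌋`, so
rounding down loses at most `m - 1` points per arc of the original chain. -/
lemma exists_relSeries_arcs_refinement (hm : 0 < m) (σ : RelSeries (arcs Φ δ m)) {n : ℕ}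
    (hσn : σ.length ≤ n)
    (hn : (n + σ.length) * m ≤ #{φ ∈ Φ | φ ∈ Set.Ioo σ.head σ.last} + σ.length) :
    ∃ τ : RelSeries (arcs Φ δ m), τ.head = σ.head ∧ τ.last = σ.last ∧ τ.length = n := by
  induction σ using RelSeries.inductionOn generalizing n with
  | singleton x =>
    have hn0 : n * m = 0 := by simpa using hn
    exact ⟨_, rfl, rfl, by simpa [hm.ne', eq_comm] using hn0⟩
  | cons σ a hab ih =>
    simp only [RelSeries.head_cons, RelSeries.last_cons, RelSeries.cons_length] at hσn hn ⊢
    obtain ⟨-, hb, -, -, hm₁⟩ := mem_arcs.1 hab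
    set N₁ := #{φ ∈ Φ | φ ∈ Set.Ioo a σ.head}
    have hN := card_filter_Ioo_le_add (a := a) (c := σ.last) hb
    obtain ⟨k, hk, hkm, τ, hτa, hτb, hkn⟩ : ∃ k, 0 < k ∧ k * m ≤ N₁ ∧
        ∃ τ : RelSeries (arcs Φ δ m), τ.head = σ.head ∧ τ.last = σ.last ∧ k + τ.length = n := by
      rcases le_or_gt (n - σ.length) (N₁ / m) with hle | hgt
      · exact ⟨n - σ.length, by omega, (Nat.le_div_iff_mul_le hm).1 hle, σ, rfl, rfl, by omega⟩
      · have hlt : N₁ < N₁ / m * m + m := Nat.lt_div_mul_add hm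
        obtain ⟨k', rfl⟩ := Nat.exists_eq_add_of_lt (hgt.trans_le (Nat.sub_le _ _))
        obtain ⟨τ, hτa, hτb, hτ⟩ := ih (n := k' + 1) (by omega) (by nlinarith)
        exact ⟨N₁ / m, Nat.div_pos hm₁ hm, Nat.div_mul_le_self _ _, τ, hτa, hτb, by omega⟩
    obtain ⟨ρ, hρa, hρb, hρ⟩ := exists_relSeries_arcs_of_mul_le hm hk hab hkm
    exact ⟨ρ.smash τ (hρb.trans hτa.symm), by simpa, by simpa,
      by rw [RelSeries.smash_length]; omega⟩

end Arcs

section Sector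

variable {p u v w x : Fin 2 → ℝ}

lemma interior_sector (huv : LinearIndependent ℝ ![u, v]) :
    interior (Sector p u v) = {x | ∃ a b : ℝ, 0 < a ∧ 0 < b ∧ x = p + a • u + b • v} := by
  let B : (Fin 2 → ℝ) ≃L[ℝ] (Fin 2 → ℝ) :=
    (basisOfLinearIndependentOfCardEqFinrank huv (by simp)).equivFun.symm.toContinuousLinearEquiv
  let F : (Fin 2 → ℝ) ≃ₜ (Fin 2 → ℝ) := B.toHomeomorph.trans (Homeomorph.addLeft p)
  have hF (c : Fin 2 → ℝ) : F c = p + c 0 • u + c 1 • v := by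
    simp [F, B, Module.Basis.equivFun_symm_apply, add_assoc]
  have himage (s : Set ℝ) : F '' Set.univ.pi (fun _ => s) =
      {x | ∃ a b : ℝ, a ∈ s ∧ b ∈ s ∧ x = p + a • u + b • v} := by
    ext x
    constructor
    · rintro ⟨c, hc, rfl⟩
      exact ⟨c 0, c 1, hc 0 trivial, hc 1 trivial, hF c⟩
    · rintro ⟨a, b, ha, hb, rfl⟩
      exact ⟨![a, b], by simp [Fin.forall_fin_two, ha, hb], hF _⟩
  calc interior (Sector p u v)
      = interior (F '' Set.univ.pi fun _ => Set.Ici 0) := congrArg interior (himage _).symm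
    _ = F '' Set.univ.pi fun _ => Set.Ioi 0 := by
      rw [← F.image_interior, interior_pi_set Set.finite_univ, interior_Ici]
    _ = _ := himage _

lemma exists_le_apply_of_mem_sector_union {E : Type*} [NormedAddCommGroup E]
    [InnerProductSpace ℝ E] (e : (Fin 2 → ℝ) ≃ₗ[ℝ] E) (hv : v ≠ 0)
    (huv : 0 ≤ inner ℝ (e v) (e u)) (hvw : 0 ≤ inner ℝ (e v) (e w)) :
    ∃ f : (Fin 2 → ℝ) →ₗ[ℝ] ℝ, f ≠ 0 ∧ ∀ x ∈ Sector p u v ∪ Sector p v w, f x ≤ f p := by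
  have hvv : 0 < inner ℝ (e v) (e v) := real_inner_self_pos.2 (by simpa)
  refine ⟨-((innerₗ E (e v)) ∘ₗ e), fun h => ?_, ?_⟩
  · simpa using (LinearMap.congr_fun h v).trans_ne (neg_ne_zero.2 hvv.ne').symm
  · rintro x (⟨a, b, ha, hb, rfl⟩ | ⟨a, b, ha, hb, rfl⟩) <;>
      simp only [LinearMap.neg_apply, LinearMap.comp_apply, LinearEquiv.coe_coe, innerₗ_apply_apply,
        map_add, map_smul, smul_eq_mul] <;> nlinarith

end Sector

lemma pos_of_sin_pos {x : ℝ} (h : 0 < Real.sin x) (hx : -π ≤ x) : 0 < x :=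
  lt_of_not_ge fun hx' => h.not_ge (Real.sin_nonpos_of_nonpos_of_neg_pi_le hx' hx)

lemma lt_pi_of_sin_pos {x : ℝ} (h : 0 < Real.sin x) (hx : x ≤ 2 * π) : x < π :=
  sub_pos.1 <| pos_of_sin_pos (by rwa [Real.sin_pi_sub]) (by linarith)

lemma eq_mul_exp_add_mul_exp_iff {a b α β : ℝ} (hab : Real.sin (b - a) ≠ 0) (z : ℂ) :
    z = α * Complex.exp (a * Complex.I) + β * Complex.exp (b * Complex.I) ↔
      α * Real.sin (b - a) = ‖z‖ * Real.sin (b - z.arg) ∧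
        β * Real.sin (b - a) = ‖z‖ * Real.sin (z.arg - a) := by
  have hre := Complex.norm_mul_cos_arg z
  have him := Complex.norm_mul_sin_arg z
  rw [Complex.ext_iff]
  simp only [Complex.add_re, Complex.add_im, Complex.re_ofReal_mul, Complex.im_ofReal_mul,
    Complex.exp_ofReal_mul_I_re, Complex.exp_ofReal_mul_I_im, ← hre, ← him]
  simp only [Real.sin_sub] at hab ⊢
  constructor
  · rintro ⟨h₁, h₂⟩
    constructor
    · linear_combination -Real.sin b * h₁ + Real.cos b * h₂
    · linear_combination Real.sin a * h₁ - Real.cos a * h₂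
  · rintro ⟨h₁, h₂⟩
    constructor
    · apply mul_left_cancel₀ hab
      linear_combination -Real.cos a * h₁ - Real.cos b * h₂
    · apply mul_left_cancel₀ hab
      linear_combination -Real.sin a * h₁ - Real.sin b * h₂

/-- The vector that becomes the unit vector with argument `θ` in the linear coordinate `e`. -/
noncomputable def rayDir (e : (Fin 2 → ℝ) ≃ₗ[ℝ] ℂ) (θ : ℝ) : Fin 2 → ℝ :=
  e.symm (Complex.exp (θ * Complex.I))

section RayDir

variable {e : (Fin 2 → ℝ) ≃ₗ[ℝ] ℂ} {p x : Fin 2 → ℝ} {a b θ : ℝ}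

lemma apply_rayDir (e : (Fin 2 → ℝ) ≃ₗ[ℝ] ℂ) (θ : ℝ) :
    e (rayDir e θ) = Complex.exp (θ * Complex.I) := e.apply_symm_apply _

lemma rayDir_ne_zero (e : (Fin 2 → ℝ) ≃ₗ[ℝ] ℂ) (θ : ℝ) : rayDir e θ ≠ 0 := by
  simp [rayDir]

lemma rayDir_neg_pi (e : (Fin 2 → ℝ) ≃ₗ[ℝ] ℂ) : rayDir e (-π) = rayDir e π := by
  simp [rayDir, Complex.exp_neg]

lemma inner_rayDir_nonneg (h : |a - b| ≤ π / 2) :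
    0 ≤ inner ℝ (e (rayDir e a)) (e (rayDir e b)) := by
  have hcos : 0 ≤ Real.cos (b - a) :=
    Real.cos_nonneg_of_mem_Icc (abs_le.1 (abs_sub_comm a b ▸ h))
  simpa only [apply_rayDir, Complex.inner, Complex.mul_re, Complex.conj_re, Complex.conj_im,
    Complex.exp_ofReal_mul_I_re, Complex.exp_ofReal_mul_I_im, neg_mul, sub_neg_eq_add,
    Real.cos_sub, mul_neg] using hcos

lemma eq_add_smul_rayDir_add_smul_rayDir_iff (hab : Real.sin (b - a) ≠ 0) {α β : ℝ} :
    x = p + α • rayDir e a + β • rayDir e b ↔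
      α * Real.sin (b - a) = ‖e (x - p)‖ * Real.sin (b - (e (x - p)).arg) ∧
        β * Real.sin (b - a) = ‖e (x - p)‖ * Real.sin ((e (x - p)).arg - a) := by
  rw [← eq_mul_exp_add_mul_exp_iff hab, add_assoc, ← sub_eq_iff_eq_add', ← e.injective.eq_iff]
  simp [apply_rayDir]

lemma linearIndependent_rayDir (hab : Real.sin (b - a) ≠ 0) :
    LinearIndependent ℝ ![rayDir e a, rayDir e b] := by
  rw [LinearIndependent.pair_iff]
  intro α β h
  simpa [hab] using (eq_add_smul_rayDir_add_smul_rayDir_iff (e := e) (p := 0) (x := 0) hab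
    (α := α) (β := β)).1 (by simpa using h.symm)

lemma mem_sector_rayDir_iff (hab : 0 < Real.sin (b - a)) :
    x ∈ Sector p (rayDir e a) (rayDir e b) ↔
      0 ≤ ‖e (x - p)‖ * Real.sin (b - (e (x - p)).arg) ∧
        0 ≤ ‖e (x - p)‖ * Real.sin ((e (x - p)).arg - a) := by
  simp only [Sector, Set.mem_ofPred_eq, eq_add_smul_rayDir_add_smul_rayDir_iff hab.ne']
  constructor
  · rintro ⟨α, β, hα, hβ, h₁, h₂⟩
    exact ⟨h₁ ▸ mul_nonneg hα hab.le, h₂ ▸ mul_nonneg hβ hab.le⟩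
  · rintro ⟨hα, hβ⟩
    exact ⟨_, _, div_nonneg hα hab.le, div_nonneg hβ hab.le,
      div_mul_cancel₀ _ hab.ne', div_mul_cancel₀ _ hab.ne'⟩

lemma mem_interior_sector_rayDir_iff (hab : 0 < Real.sin (b - a)) :
    x ∈ interior (Sector p (rayDir e a) (rayDir e b)) ↔
      0 < ‖e (x - p)‖ * Real.sin (b - (e (x - p)).arg) ∧
        0 < ‖e (x - p)‖ * Real.sin ((e (x - p)).arg - a) := by
  simp only [interior_sector (linearIndependent_rayDir hab.ne'), Set.mem_ofPred_eq,
    eq_add_smul_rayDir_add_smul_rayDir_iff hab.ne']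
  constructor
  · rintro ⟨α, β, hα, hβ, h₁, h₂⟩
    exact ⟨h₁ ▸ mul_pos hα hab, h₂ ▸ mul_pos hβ hab⟩
  · rintro ⟨hα, hβ⟩
    exact ⟨_, _, div_pos hα hab, div_pos hβ hab,
      div_mul_cancel₀ _ hab.ne', div_mul_cancel₀ _ hab.ne'⟩

lemma mem_sector_rayDir_of_arg_mem (hab : a < b) (hπ : b - a < π)
    (hx : (e (x - p)).arg ∈ Set.Icc a b) : x ∈ Sector p (rayDir e a) (rayDir e b) :=
  (mem_sector_rayDir_iff (Real.sin_pos_of_pos_of_lt_pi (by linarith) hπ)).2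
    ⟨mul_nonneg (norm_nonneg _) <|
        Real.sin_nonneg_of_nonneg_of_le_pi (by linarith [hx.2]) (by linarith [hx.1]),
      mul_nonneg (norm_nonneg _) <|
        Real.sin_nonneg_of_nonneg_of_le_pi (by linarith [hx.1]) (by linarith [hx.2])⟩

lemma mem_interior_sector_rayDir_iff_arg_mem (ha : -π ≤ a) (hab : a < b) (hb : b ≤ π)
    (hπ : b - a < π) :
    x ∈ interior (Sector p (rayDir e a) (rayDir e b)) ↔
      x ≠ p ∧ (e (x - p)).arg ∈ Set.Ioo a b := by
  have hnorm : 0 < ‖e (x - p)‖ ↔ x ≠ p := by simp [sub_eq_zero]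
  have hleft := (e (x - p)).neg_pi_lt_arg
  have hright := (e (x - p)).arg_le_pi
  rw [mem_interior_sector_rayDir_iff (Real.sin_pos_of_pos_of_lt_pi (by linarith) hπ), ← hnorm]
  constructor
  · rintro ⟨hmulb, hmula⟩
    have hx := (norm_nonneg (e (x - p))).lt_of_ne' (left_ne_zero_of_mul hmulb.ne')
    have hsinb := pos_of_mul_pos_right hmulb hx.le
    have hsina := pos_of_mul_pos_right hmula hx.le
    have hbπ := lt_pi_of_sin_pos hsinb (by linarith)
    have haπ := lt_pi_of_sin_pos hsina (by linarith)
    exact ⟨hx, sub_pos.1 (pos_of_sin_pos hsina (by linarith)),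
      sub_pos.1 (pos_of_sin_pos hsinb (by linarith))⟩
  · rintro ⟨hx, haφ, hφb⟩
    exact ⟨mul_pos hx (Real.sin_pos_of_pos_of_lt_pi (by linarith) (by linarith)),
      mul_pos hx (Real.sin_pos_of_pos_of_lt_pi (by linarith) (by linarith))⟩

lemma ne_add_smul_rayDir (hx : x ≠ p) (hθ : θ ∈ Set.Icc (-π) π) (hπ : (e (x - p)).arg ≠ π)
    (hxθ : (e (x - p)).arg ≠ θ) {r : ℝ} (hr : 0 ≤ r) : x ≠ p + r • rayDir e θ := by
  rintro rfl
  have hr' : 0 < r := hr.lt_of_ne' fun h => hx (by simp [h])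
  rw [add_sub_cancel_left, map_smul, apply_rayDir, Complex.real_smul,
    Complex.arg_real_mul _ hr'] at hπ hxθ
  rcases hθ.1.eq_or_lt with rfl | hθ'
  · exact hπ (by simp [Complex.exp_neg])
  · exact hxθ (by rw [Complex.exp_mul_I, Complex.arg_cos_add_sin_mul_I ⟨hθ', hθ.2⟩])

end RayDir

section Fan

variable {n : ℕ} {e : (Fin 2 → ℝ) ≃ₗ[ℝ] ℂ} {p : Fin 2 → ℝ} {θ : Fin (n + 1) → ℝ}

lemma exists_castSucc_lt_and_le_succ {α : Type*} [LinearOrder α] {f : Fin (n + 1) → α} {a : α}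
    (h0 : f 0 < a) (hlast : a ≤ f (Fin.last n)) : ∃ i : Fin n, f i.castSucc < a ∧ a ≤ f i.succ := by
  by_contra! h
  exact (Fin.induction (motive := (f · < a)) h0 h (Fin.last n)).not_ge hlast

lemma apply_castSucc_finRotate {α : Type*} {f : Fin (n + 1) → α} (hf : f (Fin.last n) = f 0)
    (i : Fin n) : f (finRotate n i).castSucc = f i.succ := by
  obtain _ | n := n
  · exact i.elim0
  obtain rfl | hi := eq_or_ne i (Fin.last n)
  · rw [finRotate_last, Fin.castSucc_zero, Fin.succ_last, hf]
  · congr 1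
    ext
    exact coe_finRotate_of_ne_last hi

lemma iUnion_sector_rayDir_eq_univ (hθ : StrictMono θ) (h0 : θ 0 = -π) (hlast : θ (Fin.last n) = π)
    (hgap : ∀ i : Fin n, θ i.succ - θ i.castSucc < π) :
    ⋃ i : Fin n, Sector p (rayDir e (θ i.castSucc)) (rayDir e (θ i.succ)) = Set.univ := by
  refine Set.iUnion_eq_univ_iff.2 fun x => ?_
  obtain ⟨i, hi, hi'⟩ := exists_castSucc_lt_and_le_succ
    (h0.trans_lt (e (x - p)).neg_pi_lt_arg) ((e (x - p)).arg_le_pi.trans_eq hlast.symm)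
  exact ⟨i, mem_sector_rayDir_of_arg_mem (hθ i.castSucc_lt_succ) (hgap i) ⟨hi.le, hi'⟩⟩

lemma apply_mem_Icc_neg_pi_pi (hθ : StrictMono θ) (h0 : θ 0 = -π) (hlast : θ (Fin.last n) = π)
    (i : Fin (n + 1)) : θ i ∈ Set.Icc (-π) π :=
  ⟨h0 ▸ hθ.monotone i.zero_le, hlast ▸ hθ.monotone i.le_last⟩

lemma mem_interior_sector_fan_iff (hθ : StrictMono θ) (h0 : θ 0 = -π)
    (hlast : θ (Fin.last n) = π) {i : Fin n} (hi : θ i.succ - θ i.castSucc < π)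
    {x : Fin 2 → ℝ} :
    x ∈ interior (Sector p (rayDir e (θ i.castSucc)) (rayDir e (θ i.succ))) ↔
      x ≠ p ∧ (e (x - p)).arg ∈ Set.Ioo (θ i.castSucc) (θ i.succ) :=
  mem_interior_sector_rayDir_iff_arg_mem (apply_mem_Icc_neg_pi_pi hθ h0 hlast _).1
    (hθ i.castSucc_lt_succ) (apply_mem_Icc_neg_pi_pi hθ h0 hlast _).2 hi

lemma interior_sector_rayDir_inter_eq_empty (hθ : StrictMono θ) (h0 : θ 0 = -π)
    (hlast : θ (Fin.last n) = π) (hgap : ∀ i : Fin n, θ i.succ - θ i.castSucc < π)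
    {i j : Fin n} (hij : i ≠ j) :
    interior (Sector p (rayDir e (θ i.castSucc)) (rayDir e (θ i.succ))) ∩
      interior (Sector p (rayDir e (θ j.castSucc)) (rayDir e (θ j.succ))) = ∅ := by
  wlog hlt : i < j generalizing i j
  · rw [Set.inter_comm]
    exact this hij.symm (hij.lt_or_gt.resolve_left hlt)
  refine Set.eq_empty_of_forall_notMem fun x ⟨hi, hj⟩ => ?_
  rw [mem_interior_sector_fan_iff hθ h0 hlast (hgap _)] at hi hj
  exact (hi.2.2.trans_le (hθ.monotone (Fin.succ_le_castSucc_iff.2 hlt))).not_gt hj.2.1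

lemma card_filter_arg_mem_Ioo_le {S : Finset (Fin 2 → ℝ)} (hθ : StrictMono θ) (h0 : θ 0 = -π)
    (hlast : θ (Fin.last n) = π) {i : Fin n} (hi : θ i.succ - θ i.castSucc < π)
    (hp : ∀ x ∈ S, x ≠ p) :
    #{φ ∈ S.image fun x => (e (x - p)).arg | φ ∈ Set.Ioo (θ i.castSucc) (θ i.succ)} ≤
      #{x ∈ S | x ∈ interior (Sector p (rayDir e (θ i.castSucc)) (rayDir e (θ i.succ)))} := by
  rw [Finset.filter_image]
  refine Finset.card_image_le.trans (Finset.card_le_card fun x hx => ?_)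
  obtain ⟨hxS, hx⟩ := Finset.mem_filter.1 hx
  exact Finset.mem_filter.2
    ⟨hxS, (mem_interior_sector_fan_iff hθ h0 hlast hi).2 ⟨hp x hxS, hx⟩⟩

end Fan

section GeneralPosition

variable {V : Type*} [AddCommGroup V] [Module ℝ V]

/-- The set `S` is in general position: no three distinct points of it are collinear. -/
def NoThreeCollinear (S : Finset V) : Prop :=
  ∀ x ∈ S, ∀ y ∈ S, ∀ z ∈ S, x ≠ y → y ≠ z → x ≠ z → ¬ Collinear ℝ ({x, y, z} : Set V)

lemma collinear_setOf_apply_eq (hV : Module.finrank ℝ V = 2)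
    {f : V →ₗ[ℝ] ℝ} (hf : f ≠ 0) (t : ℝ) : Collinear ℝ {x | f x = t} := by
  have : Module.Finite ℝ V := Module.finite_of_finrank_eq_succ hV
  have hker : Module.finrank ℝ (LinearMap.ker f) + 1 = Module.finrank ℝ V :=
    Module.Dual.finrank_ker_add_one_of_ne_zero hf
  have hspan : vectorSpan ℝ {x | f x = t} ≤ LinearMap.ker f := by
    rw [vectorSpan, Submodule.span_le]
    rintro _ ⟨x, hx, y, hy, rfl⟩
    simp_all
  rw [collinear_iff_finrank_le_one]
  have := Submodule.finrank_mono hspan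
  omega

lemma NoThreeCollinear.card_filter_apply_eq_le_two {S : Finset V}
    (hS : NoThreeCollinear S) (hV : Module.finrank ℝ V = 2) {f : V →ₗ[ℝ] ℝ} (hf : f ≠ 0) (t : ℝ) :
    #{x ∈ S | f x = t} ≤ 2 := by
  by_contra! h
  obtain ⟨x, hx, y, hy, z, hz, hxy, hxz, hyz⟩ := Finset.two_lt_card.1 h
  rw [Finset.mem_filter] at hx hy hz
  refine hS x hx.1 y hy.1 z hz.1 hxy hyz hxz ((collinear_setOf_apply_eq hV hf t).subset ?_)
  rintro _ (rfl | rfl | rfl)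
  exacts [hx.2, hy.2, hz.2]

end GeneralPosition

/-- The coordinate on the plane in which the lines of slope `s` become horizontal, and the
vertical lines remain vertical. -/
def shear (s : ℝ) : (Fin 2 → ℝ) ≃ₗ[ℝ] ℂ where
  toFun x := ⟨x 0, x 1 - s * x 0⟩
  map_add' x y := by
    apply Complex.ext <;> simp only [Pi.add_apply, Complex.add_re, Complex.add_im]
    ring
  map_smul' r x := by
    apply Complex.ext <;> simp only [Pi.smul_apply, smul_eq_mul, RingHom.id_apply,
      Complex.real_smul, Complex.re_ofReal_mul, Complex.im_ofReal_mul]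
    ring
  invFun z := ![z.re, z.im + s * z.re]
  left_inv x := by ext i; fin_cases i <;> simp
  right_inv z := by apply Complex.ext <;> simp

lemma shear_apply_re (s : ℝ) (x : Fin 2 → ℝ) : (shear s x).re = x 0 := rfl

lemma shear_apply_im (s : ℝ) (x : Fin 2 → ℝ) : (shear s x).im = x 1 - s * x 0 := rfl

lemma eventually_injOn_arg_sub {α : Type*} {S : Finset α} {z : α → ℂ} (hz : Set.InjOn z S) {c : ℝ}
    (hc : ∀ x ∈ S, (z x).re ≠ c) (t₀ : ℝ) :
    ∀ᶠ t in 𝓝[>] t₀, Set.InjOn (fun x => (z x - ⟨c, t⟩).arg) S := by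
  -- the height at which the line through `z q.1` and `z q.2` crosses the line `re = c`
  let crossing (q : α × α) : ℝ :=
    ((z q.1).im * ((z q.2).re - c) - (z q.2).im * ((z q.1).re - c)) / ((z q.2).re - (z q.1).re)
  filter_upwards [eventually_nhdsGT_forall_ne_and_lt_iff_le ((S ×ˢ S).image crossing) t₀]
    with t ht x hx y hy hxy
  have hx' := sub_ne_zero.2 (hc x hx)
  have hy' := sub_ne_zero.2 (hc y hy)
  have hslope : ((z x).im - t) * ((z y).re - c) = ((z y).im - t) * ((z x).re - c) := by
    have := congrArg Real.tan hxy
    simpa [Complex.tan_arg, div_eq_div_iff hx' hy'] using this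
  obtain hre | hre := eq_or_ne (z x).re (z y).re
  · rw [← hre, mul_left_inj' hx', sub_left_inj] at hslope
    exact hz hx hy (Complex.ext hre hslope)
  · refine absurd ?_ (ht _ (Finset.mem_image_of_mem crossing (Finset.mk_mem_product hx hy))).1
    rw [div_eq_iff (sub_ne_zero.2 hre.symm)]
    linear_combination hslope

/-- The axes of the complex coordinate `w` avoid `S`, and each of its four open quadrants contains
at least `m` points of `S`. -/
structure Quadrisects {α : Type*} (S : Finset α) (w : α → ℂ) (m : ℕ) : Prop where
  re_ne_zero : ∀ x ∈ S, (w x).re ≠ 0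
  im_ne_zero : ∀ x ∈ S, (w x).im ≠ 0
  le_card_neg_neg : m ≤ #{x ∈ S | (w x).re < 0 ∧ (w x).im < 0}
  le_card_pos_neg : m ≤ #{x ∈ S | 0 < (w x).re ∧ (w x).im < 0}
  le_card_pos_pos : m ≤ #{x ∈ S | 0 < (w x).re ∧ 0 < (w x).im}
  le_card_neg_pos : m ≤ #{x ∈ S | (w x).re < 0 ∧ 0 < (w x).im}

lemma exists_forall_ne_and_le_card_filter {α : Type*} {S : Finset α} {f : α → ℝ} {k : ℕ}
    (hf : ∀ t, #{x ∈ S | f x = t} ≤ 2) (hk : 0 < k) (hS : 2 * k < #S) :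
    ∃ c, (∀ x ∈ S, f x ≠ c) ∧ k ≤ #{x ∈ S | f x < c} ∧ k ≤ #{x ∈ S | c < f x} := by
  have hkS : k ≤ #S := by omega
  have hv := isOrderStatistic_orderStatistic hk hkS f
  set v := orderStatistic S k hk hkS f
  obtain ⟨c, hc⟩ := (eventually_nhdsGT_forall_ne_and_lt_iff_le (S.image f) v).exists
  rw [Finset.forall_mem_image] at hc
  have hgt : #{x ∈ S | c < f x} = #{x ∈ S | v < f x} := congrArg _ <|
    Finset.filter_congr fun x hx => by
      rw [← not_le, ← not_le, ← (hc hx).2, (hc hx).1.le_iff_lt]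
  have hlt : #{x ∈ S | f x < c} = #{x ∈ S | f x ≤ v} := congrArg _ <|
    Finset.filter_congr fun x hx => (hc hx).2
  have := hv.card_lt_card_filter_gt_add
  have := hv.2
  have := hf v
  exact ⟨c, fun x hx => (hc hx).1, by omega, by omega⟩

lemma exists_lt_card_filter_quadrants {S : Finset (Fin 2 → ℝ)} {d : ℕ} (hd : 1 ≤ d)
    (hS : NoThreeCollinear S) (hcard : 2 * (4 * d + 1) < #S) :
    ∃ s c t : ℝ, (∀ x ∈ S, x 0 ≠ c) ∧
      d < #{x ∈ S | x 0 < c ∧ x 1 - s * x 0 < t} ∧ d < #{x ∈ S | c < x 0 ∧ x 1 - s * x 0 < t} ∧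
      d < #{x ∈ S | c < x 0 ∧ t < x 1 - s * x 0} ∧ d < #{x ∈ S | x 0 < c ∧ t < x 1 - s * x 0} := by
  have hre (t : ℝ) : #{x ∈ S | x 0 = t} ≤ 2 :=
    hS.card_filter_apply_eq_le_two (by simp) (f := .proj 0)
      (fun h => by simpa using LinearMap.congr_fun h ![1, 0]) t
  have him (s t : ℝ) : #{x ∈ S | x 1 - s * x 0 = t} ≤ 2 :=
    hS.card_filter_apply_eq_le_two (by simp) (f := .proj 1 - s • .proj 0)
      (fun h => by simpa using LinearMap.congr_fun h ![0, 1]) t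
  obtain ⟨c, hc, hL, hR⟩ := exists_forall_ne_and_le_card_filter hre (by omega) hcard
  set L : Finset (Fin 2 → ℝ) := {x ∈ S | x 0 < c} with hLdef
  set R : Finset (Fin 2 → ℝ) := {x ∈ S | c < x 0} with hRdef
  obtain ⟨s, t, hLt, hRt⟩ := exists_isOrderStatistic_sub_mul (L := L) (R := R)
    (k := 2 * d + 1) (l := 2 * d + 1) (f := fun x => x 0)
    (fun x hx y hy => (Finset.mem_filter.1 hx).2.trans (Finset.mem_filter.1 hy).2)
    (fun x => x 1) (by omega) (by omega) (by omega) (by omega)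
  have hLR : #{x ∈ L | x 1 - s * x 0 = t} + #{x ∈ R | x 1 - s * x 0 = t} ≤ 2 := by
    rw [← Finset.card_union_of_disjoint]
    · exact (Finset.card_le_card (by grind)).trans (him s t)
    · rw [Finset.disjoint_left]
      grind
  obtain ⟨hLlt, hLgt⟩ := hLt.lt_card_filter_lt_and_gt_of_median hd hL
    (by have := hRt.card_filter_eq_pos; omega)
  obtain ⟨hRlt, hRgt⟩ := hRt.lt_card_filter_lt_and_gt_of_median hd hR
    (by have := hLt.card_filter_eq_pos; omega)
  simp only [hLdef, hRdef, Finset.filter_filter] at hLlt hLgt hRlt hRgt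
  exact ⟨s, c, t, hc, hLlt, hRlt, hRgt, hLgt⟩

lemma eventually_quadrisects_shear_sub {S : Finset (Fin 2 → ℝ)} {s c t₀ : ℝ} {m : ℕ}
    (hc : ∀ x ∈ S, x 0 ≠ c)
    (hSW : m ≤ #{x ∈ S | x 0 < c ∧ x 1 - s * x 0 < t₀})
    (hSE : m ≤ #{x ∈ S | c < x 0 ∧ x 1 - s * x 0 < t₀})
    (hNE : m ≤ #{x ∈ S | c < x 0 ∧ t₀ < x 1 - s * x 0})
    (hNW : m ≤ #{x ∈ S | x 0 < c ∧ t₀ < x 1 - s * x 0}) :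
    ∀ᶠ t in 𝓝[>] t₀, Quadrisects S (fun x => shear s x - ⟨c, t⟩) m := by
  filter_upwards [self_mem_nhdsWithin, eventually_nhdsGT_forall_ne_and_lt_iff_le
    (S.image fun x => x 1 - s * x 0) t₀] with t ht₀ ht
  rw [Finset.forall_mem_image] at ht
  rw [Set.mem_Ioi] at ht₀
  have hgt : ∀ x ∈ S, t₀ < x 1 - s * x 0 → t < x 1 - s * x 0 := fun x hx h =>
    (ht hx).1.lt_or_gt.resolve_left fun h' => h.not_ge ((ht hx).2.1 h')
  constructor <;> simp only [Complex.sub_re, Complex.sub_im, shear_apply_re, shear_apply_im,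
    sub_ne_zero, sub_neg, sub_pos]
  · exact hc
  · exact fun x hx => (ht hx).1
  · exact hSW.trans (Finset.card_le_card (by grind))
  · exact hSE.trans (Finset.card_le_card (by grind))
  · exact hNE.trans (Finset.card_le_card (by grind))
  · exact hNW.trans (Finset.card_le_card (by grind))

lemma exists_quadrisects_and_injOn_arg {S : Finset (Fin 2 → ℝ)} {d : ℕ} (hd : 1 ≤ d)
    (hS : NoThreeCollinear S) (hcard : 2 * (4 * d + 1) < #S) :
    ∃ (e : (Fin 2 → ℝ) ≃ₗ[ℝ] ℂ) (p : Fin 2 → ℝ),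
      Quadrisects S (fun x => e (x - p)) (d + 1) ∧ Set.InjOn (fun x => (e (x - p)).arg) S := by
  obtain ⟨s, c, t₀, hc, hSW, hSE, hNE, hNW⟩ := exists_lt_card_filter_quadrants hd hS hcard
  obtain ⟨t, hquad, hinj⟩ := ((eventually_quadrisects_shear_sub hc hSW hSE hNE hNW).and
    (eventually_injOn_arg_sub (shear s).injective.injOn hc t₀)).exists
  refine ⟨shear s, (shear s).symm ⟨c, t⟩, ?_⟩
  simp only [map_sub, LinearEquiv.apply_symm_apply]
  exact ⟨hquad, hinj⟩

lemma arg_ne_of_sin_mul_cos_eq_zero {z : ℂ} (hre : z.re ≠ 0) (him : z.im ≠ 0) {a : ℝ}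
    (ha : Real.sin a * Real.cos a = 0) : z.arg ≠ a := by
  rintro rfl
  refine mul_ne_zero him hre ?_
  rw [← Complex.norm_mul_sin_arg, ← Complex.norm_mul_cos_arg]
  linear_combination ‖z‖ ^ 2 * ha

lemma mem_arcs_image_arg_of_quadrant {α : Type*} {S : Finset α} {w : α → ℂ} {m : ℕ} {a b : ℝ}
    {P : α → Prop} [DecidablePred P] (hre : ∀ x ∈ S, (w x).re ≠ 0) (him : ∀ x ∈ S, (w x).im ≠ 0)
    (hinj : Set.InjOn (fun x => (w x).arg) S) (hab : b = a + π / 2)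
    (ha : Real.sin a * Real.cos a = 0) (hm : m ≤ #{x ∈ S | P x})
    (hP : ∀ x, P x → (w x).arg ∈ Set.Icc a b) :
    (a, b) ∈ arcs (S.image fun x => (w x).arg) (π / 2) m := by
  have hb : Real.sin b * Real.cos b = 0 := by
    rw [hab, Real.sin_add_pi_div_two, Real.cos_add_pi_div_two]
    linear_combination -ha
  have harg {t : ℝ} (ht : Real.sin t * Real.cos t = 0) (x : α) (hx : x ∈ S) : (w x).arg ≠ t :=
    arg_ne_of_sin_mul_cos_eq_zero (hre x hx) (him x hx) ht
  refine mem_arcs.2 ⟨by simpa using harg ha, by simpa using harg hb, by linarith [Real.pi_pos],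
    by linarith, hm.trans ?_⟩
  rw [Finset.filter_image, Finset.card_image_of_injOn (hinj.mono (Finset.filter_subset _ _))]
  refine Finset.card_le_card fun x hx => ?_
  obtain ⟨hxS, hxP⟩ := Finset.mem_filter.1 hx
  exact Finset.mem_filter.2 ⟨hxS, (hP x hxP).1.lt_of_ne' (harg ha x hxS),
    (hP x hxP).2.lt_of_ne (harg hb x hxS)⟩

lemma Quadrisects.exists_relSeries_arcs {α : Type*} {S : Finset α} {w : α → ℂ} {m : ℕ}
    (h : Quadrisects S w m) (hinj : Set.InjOn (fun x => (w x).arg) S) :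
    ∃ σ : RelSeries (arcs (S.image fun x => (w x).arg) (π / 2) m),
      σ.head = -π ∧ σ.last = π ∧ σ.length = 4 := by
  have arc {a b : ℝ} {P : α → Prop} [DecidablePred P] :=
    mem_arcs_image_arg_of_quadrant (m := m) (a := a) (b := b) (P := P)
      h.re_ne_zero h.im_ne_zero hinj
  have hSW := arc (a := -π) (b := -(π / 2)) (by ring) (by simp) h.le_card_neg_neg fun x hx =>
    ⟨(w x).neg_pi_lt_arg.le, not_lt.1 <| mt Complex.neg_pi_div_two_lt_arg_iff.1 <|
      not_or.2 ⟨hx.1.not_gt, hx.2.not_ge⟩⟩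
  have hSE := arc (a := -(π / 2)) (b := 0) (by ring) (by simp) h.le_card_pos_neg fun x hx =>
    ⟨Complex.neg_pi_div_two_le_arg_iff.2 (.inl hx.1.le), (Complex.arg_neg_iff.2 hx.2).le⟩
  have hNE := arc (a := 0) (b := π / 2) (by ring) (by simp) h.le_card_pos_pos fun x hx =>
    ⟨Complex.arg_nonneg_iff.2 hx.2.le, Complex.arg_le_pi_div_two_iff.2 (.inl hx.1.le)⟩
  have hNW := arc (a := π / 2) (b := π) (by ring) (by simp) h.le_card_neg_pos fun x hx =>
    ⟨not_lt.1 <| mt Complex.arg_lt_pi_div_two_iff.1 <| not_or.2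
      ⟨hx.1.not_gt, not_or.2 ⟨hx.2.not_gt, fun h0 => by simp [h0] at hx⟩⟩, (w x).arg_le_pi⟩
  exact ⟨((((RelSeries.singleton _ π).cons (π / 2) (by simpa)).cons 0 (by simpa)).cons (-(π / 2))
    (by simpa)).cons (-π) (by simpa), by simp, by simp, by simp⟩

lemma Quadrisects.arg_lt_pi {α : Type*} {S : Finset α} {w : α → ℂ} {m : ℕ}
    (h : Quadrisects S w m) {x : α} (hx : x ∈ S) : (w x).arg < π :=
  Complex.arg_lt_pi_iff.2 (.inr (h.im_ne_zero x hx))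

lemma Quadrisects.exists_relSeries_arcs_length_eq {α : Type*} {S : Finset α} {w : α → ℂ} {m n : ℕ}
    (h : Quadrisects S w m) (hinj : Set.InjOn (fun x => (w x).arg) S) (hm : 0 < m) (hn : 4 ≤ n)
    (hcard : (n + 4) * m ≤ #S + 4) :
    ∃ σ : RelSeries (arcs (S.image fun x => (w x).arg) (π / 2) m),
      σ 0 = -π ∧ σ (Fin.last σ.length) = π ∧ σ.length = n := by
  obtain ⟨σ, h0, hlast, hσ⟩ := h.exists_relSeries_arcs hinj
  have hΦ : #{φ ∈ S.image fun x => (w x).arg | φ ∈ Set.Ioo (-π) π} = #S := by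
    rw [Finset.filter_true_of_mem, Finset.card_image_of_injOn hinj]
    exact Finset.forall_mem_image.2 fun x hx => ⟨(w x).neg_pi_lt_arg, h.arg_lt_pi hx⟩
  obtain ⟨τ, hτ₀, hτ, hτn⟩ := exists_relSeries_arcs_refinement hm σ (n := n) (hσ ▸ hn)
    (by rwa [h0, hlast, hσ, hΦ])
  exact ⟨τ, hτ₀.trans h0, hτ.trans hlast, hτn⟩

/-- For `n ≥ 4`, `d ≥ 1`, and a finite planar set `S` in general position with
`|S| ≥ nd + n + 4d`, there is an apex `p` and `n` closed sectors around `p` (the `i`-th sector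
spanned by consecutive rays `u i`, `u (i+1)`, cyclically) partitioning the plane such that
(i) each sector contains at least `d+1` points of `S` in its interior, and (ii) the union of
any two adjacent sectors lies in a closed half-plane through `p`. -/
theorem sector_subdivision
    {d n : ℕ} (hd : 1 ≤ d) (hn : 4 ≤ n)
    (S : Finset (Fin 2 → ℝ)) (hcard : n * d + n + 4 * d ≤ S.card)
    -- general position: no three points collinear
    (hgen : ∀ x ∈ S, ∀ y ∈ S, ∀ z ∈ S, x ≠ y → y ≠ z → x ≠ z →
      ¬ Collinear ℝ ({x, y, z} : Set (Fin 2 → ℝ))) :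
    ∃ (p : Fin 2 → ℝ) (u : Fin n → Fin 2 → ℝ),
      (∀ i, u i ≠ 0) ∧
      -- no point of S equals the apex or lies on a boundary ray
      (∀ x ∈ S, ∀ i, ∀ a : ℝ, 0 ≤ a → x ≠ p + a • u i) ∧
      -- the sectors cover the plane
      (⋃ i : Fin n, Sector p (u i) (u (finRotate n i))) = Set.univ ∧
      -- distinct sectors have disjoint interiors
      (∀ i j : Fin n, i ≠ j →
        interior (Sector p (u i) (u (finRotate n i))) ∩
          interior (Sector p (u j) (u (finRotate n j))) = ∅) ∧
      -- (i) each sector has at least d+1 points of S in its interior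
      (∀ i : Fin n,
        d + 1 ≤ (S.filter
          (fun x => x ∈ interior (Sector p (u i) (u (finRotate n i))))).card) ∧
      -- (ii) adjacent sectors lie in a common closed half-plane through p
      (∀ i : Fin n, ∃ f : (Fin 2 → ℝ) →ₗ[ℝ] ℝ, f ≠ 0 ∧
        ∀ x ∈ Sector p (u i) (u (finRotate n i)) ∪
            Sector p (u (finRotate n i)) (u (finRotate n (finRotate n i))),
          f x ≤ f p) := by
  obtain ⟨e, p, hquad, hinj⟩ := exists_quadrisects_and_injOn_arg hd hgen (by nlinarith)
  obtain ⟨σ, h0, hlast, rfl⟩ :=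
    hquad.exists_relSeries_arcs_length_eq hinj d.succ_pos hn (by linarith)
  have hσ := strictMono_of_relSeries_arcs σ
  have harc (i : Fin σ.length) := mem_arcs.1 (σ.step i)
  have hgap (i : Fin σ.length) := abs_sub_le_of_mem_arcs (σ.step i)
  have hπ (i : Fin σ.length) : σ i.succ - σ i.castSucc < π :=
    (le_abs_self _).trans_lt ((hgap i).trans_lt (half_lt_self Real.pi_pos))
  have hrot := apply_castSucc_finRotate (f := fun j => rayDir e (σ j))
    (by simp only [hlast, h0, rayDir_neg_pi])
  have hp : ∀ x ∈ S, x ≠ p := fun x hx h => hquad.re_ne_zero x hx (by simp [h])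
  refine ⟨p, fun i => rayDir e (σ i.castSucc), fun i => rayDir_ne_zero e _, ?_, ?_, ?_, ?_, ?_⟩ <;>
    simp only [hrot]
  · exact fun x hx i a => ne_add_smul_rayDir (hp x hx) (apply_mem_Icc_neg_pi_pi hσ h0 hlast _)
      (hquad.arg_lt_pi hx).ne fun h => (harc i).1 (h ▸ Finset.mem_image_of_mem _ hx)
  · exact iUnion_sector_rayDir_eq_univ hσ h0 hlast hπ
  · exact fun i j => interior_sector_rayDir_inter_eq_empty hσ h0 hlast hπ
  · exact fun i => (harc i).2.2.2.2.trans (card_filter_arg_mem_Ioo_le hσ h0 hlast (hπ i) hp)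
  · exact fun i => exists_le_apply_of_mem_sector_union e (rayDir_ne_zero e _)
      (inner_rayDir_nonneg (hgap i))
      (by rw [← hrot i, real_inner_comm]; exact inner_rayDir_nonneg (hgap _))
end

section
/- For the path P₄ on 4 vertices in the plane: there exists a set of 8 points in general position in ℝ² admitting no partition into 4 parts whose nerve is isomorphic to P₄; consequently Tv(P₄, 2) ≥ 9. -/
/-!
By general position, parts whose hulls meet have at least four points together. In a path of four
parts the first two and the last two are thus complementary quadruples, which leaves few candidates.
Whether two hulls meet depends only on the orientations of triples of points: hulls are disjoint
exactly when the parts have a common inner tangent, a line through one point of each part with the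
rest of the parts strictly on opposite sides. The candidates are therefore ruled out by a finite
computation with integer determinants.
-/

namespace PlanarNerve

/-! ### Orientation of triples -/

section Orientation

/-- Twice the signed area of the triangle `a b c`, which is positive when the triangle is
counterclockwise. Planar points are pairs of coordinates over an arbitrary ring, so that the
orientations of points with integer coordinates can be computed. -/
def orient {R : Type*} [CommRing R] (a b c : Fin 2 → R) : R :=
  (b 0 - a 0) * (c 1 - a 1) - (b 1 - a 1) * (c 0 - a 0)

section CommRing

variable {R : Type*} [CommRing R]

@[simp]
theorem orient_self_left (a b : Fin 2 → R) : orient a b a = 0 := by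
  simp only [orient]; ring

@[simp]
theorem orient_self_right (a b : Fin 2 → R) : orient a b b = 0 := by
  simp only [orient]; ring

theorem orient_swap_left (a b c : Fin 2 → R) : orient b a c = -orient a b c := by
  simp only [orient]; ring

theorem orient_swap_right (a b c : Fin 2 → R) : orient a c b = -orient a b c := by
  simp only [orient]; ring

@[simp]
theorem orient_intCast (a b c : Fin 2 → ℤ) :
    orient (fun i => (a i : R)) (fun i => (b i : R)) (fun i => (c i : R)) = orient a b c := by
  simp only [orient]; push_cast; rfl

theorem orient_smul_add_smul (a b x y : Fin 2 → R) {s t : R} (hst : s + t = 1) :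
    orient a b (s • x + t • y) = s * orient a b x + t * orient a b y := by
  obtain rfl := eq_sub_of_add_eq hst
  simp only [orient, Pi.add_apply, Pi.smul_apply, smul_eq_mul]
  ring

end CommRing

theorem orient_eq_zero_of_collinear {𝕜 : Type*} [Field 𝕜] {a b c : Fin 2 → 𝕜}
    (h : Collinear 𝕜 {a, b, c}) : orient a b c = 0 := by
  obtain ⟨v, hv⟩ := (collinear_iff_of_mem (p₀ := a) (by simp)).1 h
  obtain ⟨r, rfl⟩ := hv b (by simp)
  obtain ⟨s, rfl⟩ := hv c (by simp)
  simp only [orient, vadd_eq_add, Pi.add_apply, Pi.smul_apply, smul_eq_mul]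
  ring

/-- No three points of the family lie on a line, expressed through orientations. -/
def InGeneralPosition {ι R : Type*} [CommRing R] (p : ι → Fin 2 → R) : Prop :=
  ∀ i j k, i ≠ j → j ≠ k → i ≠ k → orient (p i) (p j) (p k) ≠ 0

theorem inGeneralPosition_intCast {ι R : Type*} [CommRing R] [CharZero R] {p : ι → Fin 2 → ℤ} :
    InGeneralPosition (fun k i => (p k i : R)) ↔ InGeneralPosition p := by
  simp only [InGeneralPosition, orient_intCast, ne_eq, Int.cast_eq_zero]

end Orientation

/-! ### Inner tangents -/

section Tangent

variable {ι R 𝕜 : Type*} {A B : Finset ι}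

/-- Some directed line from a point of `A` to a point of `B` has the rest of `A` strictly on its
left and the rest of `B` strictly on its right. Of the two common inner tangents of disjoint
hulls, one is directed this way and the other the opposite way. -/
def HaveInnerTangent [CommRing R] [LT R] (p : ι → Fin 2 → R) (A B : Finset ι) : Prop :=
  ∃ a ∈ A, ∃ b ∈ B, (∀ k ∈ A, k ≠ a → 0 < orient (p a) (p b) (p k)) ∧
    (∀ k ∈ B, k ≠ b → orient (p a) (p b) (p k) < 0) ∧ p a ≠ p b

instance [CommRing R] [LT R] [DecidableLT R] [DecidableEq R] [DecidableEq ι]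
    (p : ι → Fin 2 → R) (A B : Finset ι) : Decidable (HaveInnerTangent p A B) :=
  inferInstanceAs (Decidable (∃ a ∈ A, ∃ b ∈ B, (∀ k ∈ A, k ≠ a → _) ∧ (∀ k ∈ B, k ≠ b → _) ∧ _))

section OrderedRing

variable [CommRing R] [LinearOrder R] [IsStrictOrderedRing R]

theorem haveInnerTangent_intCast {p : ι → Fin 2 → ℤ} :
    HaveInnerTangent (fun k i => (p k i : R)) A B ↔ HaveInnerTangent p A B := by
  simp only [HaveInnerTangent, orient_intCast, Int.cast_pos, Int.cast_lt_zero, ne_eq, funext_iff,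
    Int.cast_inj]

theorem HaveInnerTangent.symm {p : ι → Fin 2 → R} (h : HaveInnerTangent p A B) :
    HaveInnerTangent p B A := by
  obtain ⟨a, ha, b, hb, hA, hB, hab⟩ := h
  refine ⟨b, hb, a, ha, fun k hk hkb => ?_, fun k hk hka => ?_, hab.symm⟩
  · rw [orient_swap_left]
    exact neg_pos.2 (hB k hk hkb)
  · rw [orient_swap_left]
    exact neg_neg_of_pos (hA k hk hka)

theorem InGeneralPosition.haveInnerTangent_singleton {p : ι → Fin 2 → R}
    (hp : InGeneralPosition p) (hinj : Function.Injective p) {a : ι} (ha : a ∉ B)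
    (hB : B.Nonempty) (hcard : B.card ≤ 2) : HaveInnerTangent p {a} B := by
  have tangent_of_right {b : ι} (hb : b ∈ B)
      (hright : ∀ k ∈ B, k ≠ b → orient (p a) (p b) (p k) < 0) : HaveInnerTangent p {a} B :=
    ⟨a, Finset.mem_singleton_self a, b, hb,
      fun k hk hka => absurd (Finset.mem_singleton.1 hk) hka, hright,
      hinj.ne (ne_of_mem_of_not_mem hb ha).symm⟩
  classical
  obtain hone | htwo : B.card = 1 ∨ B.card = 2 := by have := hB.card_pos; omega
  · obtain ⟨b, rfl⟩ := Finset.card_eq_one.1 hone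
    exact tangent_of_right (Finset.mem_singleton_self b) (by simp)
  · obtain ⟨b, c, hbc, rfl⟩ := Finset.card_eq_two.1 htwo
    obtain ⟨hab, hac⟩ : a ≠ b ∧ a ≠ c := by simpa using ha
    obtain hneg | hpos := (hp a b c hab hbc hac).lt_or_gt
    · exact tangent_of_right (b := b) (by simp) (by simp [hneg])
    · rw [← neg_neg (orient _ _ _), ← orient_swap_right, neg_pos] at hpos
      exact tangent_of_right (b := c) (by simp) (by simp [hpos])

theorem InGeneralPosition.four_le_card_add_card {p : ι → Fin 2 → R} (hp : InGeneralPosition p)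
    (hinj : Function.Injective p) (hA : A.Nonempty) (hB : B.Nonempty) (hAB : Disjoint A B)
    (h : ¬HaveInnerTangent p A B) : 4 ≤ A.card + B.card := by
  contrapose! h
  have hApos := hA.card_pos
  have hBpos := hB.card_pos
  obtain hAone | hBone : A.card = 1 ∨ B.card = 1 := by omega
  · obtain ⟨a, rfl⟩ := Finset.card_eq_one.1 hAone
    exact hp.haveInnerTangent_singleton hinj (Finset.disjoint_singleton_left.1 hAB) hB (by omega)
  · obtain ⟨b, rfl⟩ := Finset.card_eq_one.1 hBone
    exact (hp.haveInnerTangent_singleton hinj (Finset.disjoint_singleton_right.1 hAB) hA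
      (by omega)).symm

end OrderedRing

section OrderedField

variable [Field 𝕜] [LinearOrder 𝕜] [IsStrictOrderedRing 𝕜]

theorem convex_insert_setOf_orient_pos (a b : Fin 2 → 𝕜) {c : Fin 2 → 𝕜}
    (hc : 0 ≤ orient a b c) : Convex 𝕜 (insert c {x | 0 < orient a b x}) := by
  refine convex_iff_pairwise_pos.2 fun x hx y hy hxy s t hs ht hst => Or.inr ?_
  rw [Set.mem_ofPred_eq, orient_smul_add_smul a b x y hst]
  obtain rfl | hx := hx <;> obtain rfl | hy := hy
  · exact absurd rfl hxy
  · exact add_pos_of_nonneg_of_pos (mul_nonneg hs.le hc) (mul_pos ht hy)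
  · exact add_pos_of_pos_of_nonneg (mul_pos hs hx) (mul_nonneg ht.le hc)
  · exact add_pos (mul_pos hs hx) (mul_pos ht hy)

theorem convexHull_image_subset_insert_setOf_orient_pos {p : ι → Fin 2 → 𝕜} {a : ι}
    {c d : Fin 2 → 𝕜} (ha : 0 ≤ orient c d (p a))
    (hA : ∀ k ∈ A, k ≠ a → 0 < orient c d (p k)) :
    convexHull 𝕜 (p '' A) ⊆ insert (p a) {x | 0 < orient c d x} := by
  refine convexHull_min ?_ (convex_insert_setOf_orient_pos c d ha)
  rintro _ ⟨k, hk, rfl⟩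
  obtain rfl | hka := eq_or_ne k a
  · exact Set.mem_insert _ _
  · exact Or.inr (hA k hk hka)

theorem HaveInnerTangent.disjoint_convexHull {p : ι → Fin 2 → 𝕜} (h : HaveInnerTangent p A B) :
    Disjoint (convexHull 𝕜 (p '' A)) (convexHull 𝕜 (p '' B)) := by
  obtain ⟨a, -, b, -, hA, hB, hab⟩ := h
  have hB' : ∀ k ∈ B, k ≠ b → 0 < orient (p b) (p a) (p k) := fun k hk hkb => by
    rw [orient_swap_left]
    exact neg_pos.2 (hB k hk hkb)
  refine Set.disjoint_left.2 fun x hxA hxB => ?_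
  have hleft := convexHull_image_subset_insert_setOf_orient_pos (by simp) hA hxA
  have hright := convexHull_image_subset_insert_setOf_orient_pos (by simp) hB' hxB
  simp only [Set.mem_insert_iff, Set.mem_ofPred_eq, orient_swap_left (p a)] at hleft hright
  rcases hleft with rfl | hleft <;> rcases hright with hx | hright
  · exact hab hx
  · simp at hright
  · simp [hx] at hleft
  · linarith

/- Among the vectors from `A` to `B`, all in the open half plane where `α x + β y` is positive, the
one that turns furthest counterclockwise spans the tangent. It maximizes the cotangent-like ratio of
`α y - β x` to `α x + β y`. -/
theorem exists_weak_innerTangent {p : ι → Fin 2 → 𝕜} (hA : A.Nonempty) (hB : B.Nonempty)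
    {α β : 𝕜} (hsep : ∀ a ∈ A, ∀ b ∈ B, 0 < α * (p b 0 - p a 0) + β * (p b 1 - p a 1)) :
    ∃ a ∈ A, ∃ b ∈ B, (∀ k ∈ A, 0 ≤ orient (p a) (p b) (p k)) ∧
      ∀ k ∈ B, orient (p a) (p b) (p k) ≤ 0 := by
  let height (e : ι × ι) : 𝕜 := α * (p e.2 0 - p e.1 0) + β * (p e.2 1 - p e.1 1)
  let shift (e : ι × ι) : 𝕜 := α * (p e.2 1 - p e.1 1) - β * (p e.2 0 - p e.1 0)
  obtain ⟨⟨a, b⟩, hab, hmax⟩ :=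
    (A ×ˢ B).exists_max_image (fun e => shift e / height e) (hA.product hB)
  obtain ⟨ha, hb⟩ := Finset.mem_product.1 hab
  have hle {c d : ι} (hc : c ∈ A) (hd : d ∈ B) :
      shift (c, d) * height (a, b) ≤ shift (a, b) * height (c, d) :=
    (div_le_div_iff₀ (hsep c hc d hd) (hsep a ha b hb)).1
      (hmax (c, d) (Finset.mk_mem_product hc hd))
  have hnorm : 0 < α ^ 2 + β ^ 2 := by
    refine lt_of_le_of_ne (by positivity) fun h0 => (hsep a ha b hb).ne' ?_
    obtain ⟨rfl, rfl⟩ : α = 0 ∧ β = 0 := by constructor <;> nlinarith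
    simp
  refine ⟨a, ha, b, hb, fun k hk => ?_, fun k hk => ?_⟩
  · refine (mul_nonneg_iff_of_pos_left hnorm).1 ?_
    have := hle hk hb
    simp only [shift, height, orient] at this ⊢
    linear_combination this
  · refine (mul_nonpos_iff_pos_imp_nonpos.1 ?_).1 hnorm
    have := hle ha hk
    simp only [shift, height, orient] at this ⊢
    linear_combination this

end OrderedField

theorem exists_linear_separation_of_disjoint_convexHull {p : ι → Fin 2 → ℝ}
    (h : Disjoint (convexHull ℝ (p '' A)) (convexHull ℝ (p '' B))) :
    ∃ α β : ℝ, ∀ a ∈ A, ∀ b ∈ B, 0 < α * (p b 0 - p a 0) + β * (p b 1 - p a 1) := by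
  obtain ⟨f, u, v, hA, huv, hB⟩ := geometric_hahn_banach_compact_closed
    (convex_convexHull ℝ _) (A.finite_toSet.image p |>.isCompact_convexHull ℝ)
    (convex_convexHull ℝ _) (B.finite_toSet.image p |>.isClosed_convexHull ℝ) h
  refine ⟨f (Pi.single 0 1), f (Pi.single 1 1), fun a ha b hb => ?_⟩
  have hab : f (p a) < f (p b) :=
    (hA _ (subset_convexHull ℝ _ ⟨a, ha, rfl⟩)).trans
      (huv.trans (hB _ (subset_convexHull ℝ _ ⟨b, hb, rfl⟩)))
  have hf (x : Fin 2 → ℝ) : f x = f (Pi.single 0 1) * x 0 + f (Pi.single 1 1) * x 1 := by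
    conv_lhs => rw [pi_eq_sum_univ' x]
    simp only [Fin.sum_univ_two, map_add, map_smul, smul_eq_mul, mul_comm]
  rw [hf (p a), hf (p b)] at hab
  linarith

theorem InGeneralPosition.disjoint_convexHull_iff {p : ι → Fin 2 → ℝ} (hp : InGeneralPosition p)
    (hA : A.Nonempty) (hB : B.Nonempty) :
    Disjoint (convexHull ℝ (p '' A)) (convexHull ℝ (p '' B)) ↔ HaveInnerTangent p A B := by
  refine ⟨fun h => ?_, HaveInnerTangent.disjoint_convexHull⟩
  have hne {i j : ι} (hi : i ∈ A) (hj : j ∈ B) : p i ≠ p j :=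
    h.ne_of_mem (subset_convexHull ℝ _ ⟨i, hi, rfl⟩) (subset_convexHull ℝ _ ⟨j, hj, rfl⟩)
  obtain ⟨α, β, hsep⟩ := exists_linear_separation_of_disjoint_convexHull h
  obtain ⟨a, ha, b, hb, hleft, hright⟩ := exists_weak_innerTangent hA hB hsep
  have hab := hne ha hb
  refine ⟨a, ha, b, hb, fun k hk hka => ?_, fun k hk hkb => ?_, hab⟩
  · have hkb := hne hk hb
    exact (hleft k hk).lt_of_ne' (hp a b k (by grind) (by grind) hka.symm)
  · have hak := hne ha hk
    exact (hright k hk).lt_of_ne (hp a b k (by grind) hkb.symm (by grind))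

end Tangent

/-! ### Partitions and nerves -/

/-- The ordered partitions of the entries of a list without duplicates into two nonempty classes.
They are lists because the kernel enumerates these much faster than the subsets of a `Finset`. -/
def bipartitions {ι : Type*} [DecidableEq ι] (l : List ι) : List (List ι × List ι) :=
  (l.sublists.map fun s => (s, l.filter (· ∉ s))).filter fun e => e.1 ≠ [] ∧ e.2 ≠ []

theorem exists_mem_bipartitions {ι : Type*} [DecidableEq ι] {l : List ι} {A B : Finset ι}
    (hA : A.Nonempty) (hB : B.Nonempty) (hAB : Disjoint A B) (hl : l.toFinset = A ∪ B) :
    ∃ e ∈ bipartitions l, e.1.toFinset = A ∧ e.2.toFinset = B := by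
  let s := l.filter (· ∈ A)
  have hs : s.toFinset = A := by
    rw [List.toFinset_filter, hl]
    ext
    simp
  have hsc : (l.filter (· ∉ s)).toFinset = B := by
    rw [← Finset.union_sdiff_cancel_left hAB, ← hl, ← hs]
    ext
    simp
  refine ⟨(s, l.filter (· ∉ s)), List.mem_filter.2 ⟨List.mem_map.2 ⟨s, ?_, rfl⟩, ?_⟩, hs, hsc⟩
  · exact List.mem_sublists.2 List.filter_sublist
  · rw [decide_eq_true_iff, ← List.toFinset_nonempty_iff, ← List.toFinset_nonempty_iff, hs, hsc]
    exact ⟨hA, hB⟩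

theorem compl_union_eq_union_of_partition {ι : Type*} [Fintype ι] [DecidableEq ι]
    {Q : Fin 4 → Finset ι} (hdisj : ∀ i j, i ≠ j → Disjoint (Q i) (Q j))
    (hcover : ∀ k, ∃ j, k ∈ Q j) : (Q 0 ∪ Q 1)ᶜ = Q 2 ∪ Q 3 := by
  refine IsCompl.compl_eq (IsCompl.of_le (Disjoint.le_bot ?_) fun k _ => ?_)
  · simp [hdisj]
  · simpa [Fin.exists_fin_succ, or_assoc] using hcover k

theorem exists_index_partition {ι κ E : Type*} [Fintype ι] [Fintype κ] [DecidableEq E]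
    {p : ι → E} {P : κ → Finset E} (hdisj : ∀ i j, i ≠ j → Disjoint (P i) (P j))
    (hcover : Finset.univ.image p = Finset.univ.biUnion P) :
    ∃ Q : κ → Finset ι, (∀ j, p '' Q j = P j) ∧ (∀ i j, i ≠ j → Disjoint (Q i) (Q j)) ∧
      ∀ k, ∃ j, k ∈ Q j := by
  simp only [Finset.ext_iff, Finset.mem_image, Finset.mem_biUnion, Finset.mem_univ, true_and]
    at hcover
  refine ⟨fun j => {k | p k ∈ P j}, fun j => ?_, fun i j hij => ?_, fun k => ?_⟩
  · have hrange : ↑(P j) ⊆ Set.range p := fun x hx => (hcover x).2 ⟨j, hx⟩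
    simpa [Set.preimage] using Set.image_preimage_eq_of_subset hrange
  · exact Finset.disjoint_filter.2 fun k _ hi hj =>
      Finset.disjoint_left.1 (hdisj i j hij) hi hj
  · simpa using (hcover (p k)).1 ⟨k, rfl⟩

/-- The 1-skeleton of the nerve of the convex hulls of a family of sets: parts are adjacent when
their hulls meet. The path `P₄` is triangle-free, so it determines the higher faces. -/
def hullGraph {κ E : Type*} [AddCommGroup E] [Module ℝ E] (P : κ → Set E) : SimpleGraph κ where
  Adj i j := i ≠ j ∧ (convexHull ℝ (P i) ∩ convexHull ℝ (P j)).Nonempty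
  symm := ⟨fun _ _ h => ⟨h.1.symm, Set.inter_comm _ _ ▸ h.2⟩⟩
  loopless := ⟨fun _ h => h.1 rfl⟩

/-! ### The eight points -/

/-- The integer coordinates of the eight points. -/
def witness : Fin 8 → Fin 2 → ℤ :=
  ![![222, 243], ![238, 13], ![131, 50], ![154, 105],
    ![166, 145], ![134, 106], ![174, 188], ![18, 51]]

/-- The eight points in the real plane. -/
def witnessPoint (k : Fin 8) : Fin 2 → ℝ := fun i => witness k i

theorem witness_injective : Function.Injective witness := by
  decide +kernel

theorem inGeneralPosition_witness : InGeneralPosition witness := by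
  unfold InGeneralPosition
  decide +kernel

theorem witnessPoint_injective : Function.Injective witnessPoint :=
  Int.cast_injective.comp_left.comp witness_injective

theorem inGeneralPosition_witnessPoint : InGeneralPosition witnessPoint :=
  inGeneralPosition_intCast.2 inGeneralPosition_witness

theorem haveInnerTangent_witnessPoint {A B : Finset (Fin 8)} :
    HaveInnerTangent witnessPoint A B ↔ HaveInnerTangent witness A B :=
  haveInnerTangent_intCast

set_option synthInstance.maxSize 256 in
theorem not_path_witness_bipartitions :
    ∀ e ∈ bipartitions (List.finRange 8), e.1.toFinset.card = 4 →
      ∀ s ∈ bipartitions e.1, ¬HaveInnerTangent witness s.1.toFinset s.2.toFinset →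
      ∀ t ∈ bipartitions e.2, ¬HaveInnerTangent witness t.1.toFinset t.2.toFinset →
      ¬HaveInnerTangent witness s.2.toFinset t.1.toFinset →
      HaveInnerTangent witness s.1.toFinset t.1.toFinset →
      HaveInnerTangent witness s.1.toFinset t.2.toFinset →
      ¬HaveInnerTangent witness s.2.toFinset t.2.toFinset := by
  decide +kernel

theorem not_path_witness {A B C D : Finset (Fin 8)} (hA : A.Nonempty) (hB : B.Nonempty)
    (hC : C.Nonempty) (hD : D.Nonempty) (hAB : Disjoint A B) (hCD : Disjoint C D)
    (hcompl : (A ∪ B)ᶜ = C ∪ D) (hcard : (A ∪ B).card = 4)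
    (hnAB : ¬HaveInnerTangent witness A B) (hnBC : ¬HaveInnerTangent witness B C)
    (hnCD : ¬HaveInnerTangent witness C D) (hAC : HaveInnerTangent witness A C)
    (hAD : HaveInnerTangent witness A D) : ¬HaveInnerTangent witness B D := by
  obtain ⟨e, he, hAB', hCD'⟩ := exists_mem_bipartitions (l := List.finRange 8)
    (hA.mono Finset.subset_union_left) (hC.mono Finset.subset_union_left)
    (hcompl ▸ disjoint_compl_right) (by rw [List.toFinset_finRange, ← hcompl, Finset.union_compl])
  obtain ⟨s, hs, rfl, rfl⟩ := exists_mem_bipartitions hA hB hAB hAB'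
  obtain ⟨t, ht, rfl, rfl⟩ := exists_mem_bipartitions hC hD hCD hCD'
  exact not_path_witness_bipartitions e he (hAB' ▸ hcard) s hs hnAB t ht hnCD hnBC hAC hAD

theorem hullGraph_adj_witnessPoint {κ : Type*} {Q : κ → Finset (Fin 8)}
    (hne : ∀ j, (Q j).Nonempty) {i j : κ} (hij : i ≠ j) :
    (hullGraph fun j => witnessPoint '' Q j).Adj i j ↔
      ¬HaveInnerTangent witness (Q i) (Q j) := by
  rw [← haveInnerTangent_witnessPoint,
    ← inGeneralPosition_witnessPoint.disjoint_convexHull_iff (hne i) (hne j),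
    Set.not_disjoint_iff_nonempty_inter]
  exact and_iff_right hij

theorem hullGraph_witnessPoint_ne_pathGraph {Q : Fin 4 → Finset (Fin 8)}
    (hne : ∀ j, (Q j).Nonempty) (hdisj : ∀ i j, i ≠ j → Disjoint (Q i) (Q j))
    (hcover : ∀ k, ∃ j, k ∈ Q j) :
    (hullGraph fun j => witnessPoint '' Q j) ≠ SimpleGraph.pathGraph 4 := by
  intro hpath
  have htangent {i j : Fin 4} (hij : i ≠ j) :
      ¬HaveInnerTangent witness (Q i) (Q j) ↔ (i : ℕ) + 1 = j ∨ (j : ℕ) + 1 = i := by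
    rw [← hullGraph_adj_witnessPoint hne hij, hpath, SimpleGraph.pathGraph_adj]
  have hadj {i j : Fin 4} (hij : (i : ℕ) + 1 = j) : ¬HaveInnerTangent witness (Q i) (Q j) :=
    (htangent (by grind)).2 (Or.inl hij)
  have hnonadj {i j : Fin 4} (hij : (i : ℕ) + 1 < j) : HaveInnerTangent witness (Q i) (Q j) :=
    not_not.1 fun h => by
      have := (htangent (by grind)).1 h
      omega
  have hfour {i j : Fin 4} (hij : (i : ℕ) + 1 = j) : 4 ≤ (Q i ∪ Q j).card := by
    have hQij := hdisj i j (by grind)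
    rw [Finset.card_union_of_disjoint hQij]
    exact inGeneralPosition_witness.four_le_card_add_card witness_injective (hne i) (hne j) hQij
      (hadj hij)
  have hcompl := compl_union_eq_union_of_partition hdisj hcover
  have hcard : (Q 0 ∪ Q 1).card = 4 := by
    have hsum := Finset.card_add_card_compl (Q 0 ∪ Q 1)
    rw [hcompl, Fintype.card_fin] at hsum
    have hle : 4 ≤ (Q 0 ∪ Q 1).card := hfour rfl
    have hle' : 4 ≤ (Q 2 ∪ Q 3).card := hfour rfl
    omega
  exact not_path_witness (hne 0) (hne 1) (hne 2) (hne 3) (hdisj 0 1 (by decide))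
    (hdisj 2 3 (by decide)) hcompl hcard (hadj rfl) (hadj rfl) (hadj rfl) (hnonadj (by decide))
    (hnonadj (by decide)) (hnonadj (by decide))

end PlanarNerve

open PlanarNerve

/-- There is a set of 8 points in general position in the plane admitting no
partition into 4 parts whose nerve is isomorphic to the path `P₄` (i.e., up to relabeling,
exactly the pairs `{0,1}, {1,2}, {2,3}` of parts have intersecting convex hulls, and no
triple intersection is nonempty). Consequently `Tv(P₄, 2) ≥ 9`. -/
theorem eight_points_without_P4 :
    ∃ S : Finset (Fin 2 → ℝ), S.card = 8 ∧
      -- general position: no three points collinear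
      (∀ x ∈ S, ∀ y ∈ S, ∀ z ∈ S, x ≠ y → y ≠ z → x ≠ z →
        ¬ Collinear ℝ ({x, y, z} : Set (Fin 2 → ℝ))) ∧
      ∀ P : Fin 4 → Finset (Fin 2 → ℝ),
        (∀ i, (P i).Nonempty) →
        (∀ i j, i ≠ j → Disjoint (P i) (P j)) →
        S = Finset.univ.biUnion P →
        ¬ ∃ σ : Fin 4 ≃ Fin 4,
          (∀ i j : Fin 4, i ≠ j →
            ((convexHull ℝ (P (σ i) : Set (Fin 2 → ℝ)) ∩
              convexHull ℝ (P (σ j) : Set (Fin 2 → ℝ))).Nonempty ↔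
              ((i : ℕ) + 1 = (j : ℕ) ∨ (j : ℕ) + 1 = (i : ℕ)))) ∧
          (∀ i j k : Fin 4, i ≠ j → j ≠ k → i ≠ k →
            convexHull ℝ (P i : Set (Fin 2 → ℝ)) ∩
              convexHull ℝ (P j : Set (Fin 2 → ℝ)) ∩
              convexHull ℝ (P k : Set (Fin 2 → ℝ)) = ∅) := by
  classical
  refine ⟨Finset.univ.image witnessPoint, ?_, ?_, ?_⟩
  · rw [Finset.card_image_of_injective _ witnessPoint_injective, Finset.card_fin]
  · simp only [Finset.mem_image, Finset.mem_univ, true_and]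
    rintro _ ⟨i, rfl⟩ _ ⟨j, rfl⟩ _ ⟨k, rfl⟩ hij hjk hik hcol
    exact inGeneralPosition_witnessPoint i j k (ne_of_apply_ne _ hij) (ne_of_apply_ne _ hjk)
      (ne_of_apply_ne _ hik) (orient_eq_zero_of_collinear hcol)
  · rintro P hne hdisj hcover ⟨σ, hσ, -⟩
    obtain ⟨Q, hQ, hQdisj, hQcover⟩ := exists_index_partition hdisj hcover
    have hQne (j) : (Q j).Nonempty := by
      simpa [← Finset.coe_nonempty, ← hQ] using hne j
    refine hullGraph_witnessPoint_ne_pathGraph (Q := Q ∘ σ) (fun j => hQne (σ j))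
      (fun i j hij => hQdisj _ _ (σ.injective.ne hij))
      (fun k => σ.surjective.exists.1 (hQcover k)) ?_
    ext i j
    obtain rfl | hij := eq_or_ne i j
    · simp
    · simp only [Function.comp_apply, hQ, SimpleGraph.pathGraph_adj, ← hσ i j hij]
      exact and_iff_right hij
end
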